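/- Every 2-connected planar graph with minimum degree at least 5 contains K₄ minus an edge as a subgraph. -/

import Mathlib

open SimpleGraph

variable {V : Type*}

/-- `K₄⁻` (two triangles sharing the edge `ab`; the edge `cd` may be absent)
occurs as a subgraph of `G`. -/
def containsK4minus (G : SimpleGraph V) : Prop :=
  ∃ a b c d : V, a ≠ b ∧ a ≠ c ∧ a ≠ d ∧ b ≠ c ∧ b ≠ d ∧ c ≠ d ∧
    G.Adj a b ∧ G.Adj a c ∧ G.Adj a d ∧ G.Adj b c ∧ G.Adj b d

/-- `G` contains a subdivision of `K₅`: five branch vertices joined by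
pairwise internally disjoint paths. -/
def containsK5Subdivision (G : SimpleGraph V) : Prop :=
  ∃ (b : Fin 5 → V) (P : ∀ i j : Fin 5, G.Walk (b i) (b j)),
    Function.Injective b ∧
    (∀ i j, i ≠ j → (P i j).IsPath) ∧
    (∀ i j, i ≠ j → ∀ k, b k ∈ (P i j).support → k = i ∨ k = j) ∧
    (∀ i j i' j', i < j → i' < j' → (i, j) ≠ (i', j') →
      ∀ x, x ∈ (P i j).support → x ∈ (P i' j').support → x = b i ∨ x = b j)

/-- `G` has an `H`-minor (branch sets are connected, disjoint, joined by edges). -/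
def HasMinor {W : Type*} (G : SimpleGraph V) (H : SimpleGraph W) : Prop :=
  ∃ f : W → Set V,
    (∀ w, (G.induce (f w)).Connected) ∧
    (∀ w₁ w₂, w₁ ≠ w₂ → Disjoint (f w₁) (f w₂)) ∧
    (∀ w₁ w₂, H.Adj w₁ w₂ → ∃ x ∈ f w₁, ∃ y ∈ f w₂, G.Adj x y)

/-- Planarity, via Wagner's theorem: no `K₅` and no `K₃,₃` minor. -/
def IsPlanar (G : SimpleGraph V) : Prop :=
  ¬ HasMinor G (completeGraph (Fin 5)) ∧
  ¬ HasMinor G (completeBipartiteGraph (Fin 3) (Fin 3))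

/-- `G` is `k`-connected: more than `k` vertices, and removing fewer than `k`
vertices leaves a connected graph. -/
def IsKConnected (k : ℕ) (G : SimpleGraph V) : Prop :=
  k < (Set.univ : Set V).ncard ∧
  ∀ S : Set V, S.Finite → S.ncard < k → (G.induce Sᶜ).Connected

/-- Boundary of a subgraph `H` of `G`: vertices of `H` incident with an edge
of `G` not in `H`. -/
def bnd (G : SimpleGraph V) (H : G.Subgraph) : Set V :=
  {v | v ∈ H.verts ∧ ∃ w, G.Adj v w ∧ ¬ H.Adj v w}

/-- A `k`-hammock: connected subgraph with boundary of size `k`. -/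
def IsHammock (G : SimpleGraph V) (k : ℕ) (H : G.Subgraph) : Prop :=
  H.Connected ∧ (bnd G H).ncard = k

def TrivialHammock (G : SimpleGraph V) (H : G.Subgraph) : Prop :=
  H.verts = bnd G H

def DegenerateHammock (G : SimpleGraph V) (H : G.Subgraph) : Prop :=
  H.verts.ncard = (bnd G H).ncard + 1

def FatHammock (G : SimpleGraph V) (H : G.Subgraph) : Prop :=
  (bnd G H).ncard + 2 ≤ H.verts.ncard

/-- A `4`-hammock is minimal if all its proper `4`-hammocks are trivial or degenerate. -/
def Minimal4Hammock (G : SimpleGraph V) (H : G.Subgraph) : Prop :=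
  IsHammock G 4 H ∧
  ∀ H' : G.Subgraph, H' ≤ H → H' ≠ H → IsHammock G 4 H' →
    TrivialHammock G H' ∨ DegenerateHammock G H'

def MinimalFat4Hammock (G : SimpleGraph V) (H : G.Subgraph) : Prop :=
  Minimal4Hammock G H ∧ FatHammock G H

/-- The list `l` records a cycle of `G` (vertices in clockwise order). -/
def IsCycleList (G : SimpleGraph V) (l : List V) : Prop :=
  l.Nodup ∧ 3 ≤ l.length ∧
    ∀ i : Fin l.length,
      G.Adj (l.get i) (l.get ⟨((i : ℕ) + 1) % l.length, Nat.mod_lt _ i.pos⟩)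

/-- `x` and `y` are consecutive on the cyclic list `C`. -/
def CycAdj (C : List V) (x y : V) : Prop :=
  ∃ i : Fin C.length,
    (C.get i = x ∧ C.get ⟨((i : ℕ) + 1) % C.length, Nat.mod_lt _ i.pos⟩ = y) ∨
    (C.get i = y ∧ C.get ⟨((i : ℕ) + 1) % C.length, Nat.mod_lt _ i.pos⟩ = x)

/-- Clockwise (forward) distance between positions on a cycle of length `n`. -/
def cycDist (n i j : ℕ) : ℕ := (j + n - i) % n

/-- The open segment of the cycle `C` from `a` clockwise to `b`. -/
def segOpen (C : List V) (a b : V) : Set V :=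
  {x | ∃ i j k : Fin C.length, C.get i = a ∧ C.get j = b ∧ C.get k = x ∧
    k ≠ i ∧ k ≠ j ∧ cycDist C.length (i : ℕ) (k : ℕ) < cycDist C.length (i : ℕ) (j : ℕ)}

/-- The closed segment of the cycle `C` from `a` clockwise to `b`. -/
def segClosed (C : List V) (a b : V) : Set V := segOpen C a b ∪ {a, b}

/-- `a 0, a 1, a 2, a 3` appear in this clockwise order along the cycle `C`. -/
def ClockwiseOn (C : List V) (a : Fin 4 → V) : Prop :=
  ∃ p : Fin 4 → Fin C.length, (∀ j, C.get (p j) = a j) ∧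
    ∀ j k : Fin 4, j < k →
      cycDist C.length ((p 0 : Fin C.length) : ℕ) ((p j : Fin C.length) : ℕ) <
        cycDist C.length ((p 0 : Fin C.length) : ℕ) ((p k : Fin C.length) : ℕ)

/-- `x` and `y` are consecutive among the points of `S` on the cycle `C`:
one of the two open arcs between them misses `S`. -/
def ConsecutiveOn (C : List V) (S : Set V) (x y : V) : Prop :=
  segOpen C x y ∩ S = ∅ ∨ segOpen C y x ∩ S = ∅

/-- A combinatorial plane graph: a graph together with its facial cycles and a
distinguished outer face; every edge lies on exactly two faces and every vertex
on exactly `deg` faces (valid for `2`-connected plane graphs). -/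
structure PlaneGraph (V : Type*) where
  graph : SimpleGraph V
  faces : Finset (List V)
  outer : List V
  outer_mem : outer ∈ faces
  faces_cycle : ∀ f ∈ faces, IsCycleList graph f
  edge_two_faces : ∀ x y, graph.Adj x y →
    {f ∈ (faces : Set (List V)) | CycAdj f x y}.ncard = 2
  vertex_faces : ∀ v : V,
    {f ∈ (faces : Set (List V)) | v ∈ f}.ncard = (graph.neighborSet v).ncard

def Cofacial (P : PlaneGraph V) (u w : V) : Prop :=
  ∃ f ∈ P.faces, u ∈ f ∧ w ∈ f

/-- `C` is the rim of the facial wheel `S_u`: the induced cycle on the vertices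
cofacial with `u`, containing `N(u)` and separating `u` from the rest of the graph. -/
def IsFacialRim (P : PlaneGraph V) (u : V) (C : List V) : Prop :=
  IsCycleList P.graph C ∧ u ∉ C ∧
  (∀ w, w ∈ C ↔ (w ≠ u ∧ Cofacial P u w)) ∧
  P.graph.neighborSet u ⊆ {x | x ∈ C} ∧
  (∀ x ∈ C, ∀ y ∈ C, P.graph.Adj x y → CycAdj C x y) ∧
  (∀ w, w ∉ C → w ≠ u → ∀ p : P.graph.Walk u w, ∃ x ∈ p.support, x ∈ C)

/-- The facial wheel `S_u` (hub `u`, spokes, and rim `C`) is a subgraph of `H`. -/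
def WheelIn (G : SimpleGraph V) (H : G.Subgraph) (u : V) (C : List V) : Prop :=
  u ∈ H.verts ∧ (∀ x ∈ C, x ∈ H.verts) ∧
  (∀ x, G.Adj u x → H.Adj u x) ∧
  (∀ x y, CycAdj C x y → H.Adj x y)

/-- A system of `k` pairwise vertex-disjoint `(A,B)`-paths inside the subgraph `H`,
internally disjoint from `A ∪ B`. -/
structure Linkage (G : SimpleGraph V) (H : G.Subgraph) (A B : Set V) (k : ℕ) where
  s : Fin k → V
  t : Fin k → V
  walk : ∀ i, G.Walk (s i) (t i)
  isPath : ∀ i, (walk i).IsPath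
  support_mem : ∀ i, ∀ x ∈ (walk i).support, x ∈ H.verts
  edges_mem : ∀ i, ∀ e ∈ (walk i).edges, e ∈ H.edgeSet
  s_mem : ∀ i, s i ∈ A
  t_mem : ∀ i, t i ∈ B
  internal : ∀ i, ∀ x ∈ (walk i).support, x ≠ s i → x ≠ t i → x ∉ A ∧ x ∉ B
  disj : ∀ i j, i ≠ j → ∀ x ∈ (walk i).support, x ∉ (walk j).support

/-- A `C_u`-linkage: a `(bnd H, C)`-4-linkage in `H`. -/
abbrev CuLinkage (G : SimpleGraph V) (H : G.Subgraph) (C : List V) :=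
  Linkage G H (bnd G H) {x | x ∈ C} 4

/-- `α(L)`: the number of endpoints of the linkage lying in `N(u)`. -/
noncomputable def lAlpha (G : SimpleGraph V) (u : V) {H : G.Subgraph} {A B : Set V} {k : ℕ}
    (L : Linkage G H A B k) : ℕ :=
  {i : Fin k | L.t i ∈ G.neighborSet u}.ncard

/-- Data of a short wheel: the four neighbours of `u` in clockwise rim order,
two edge-disjoint triangles at `u`, and the two remaining rim segments of
order between 2 and 4, not both of order 4. -/
def ShortWheelOn (G : SimpleGraph V) (u : V) (C : List V) (n : Fin 4 → V) : Prop :=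
  ClockwiseOn C n ∧ Set.range n = G.neighborSet u ∧
  G.Adj (n 0) (n 1) ∧ G.Adj (n 2) (n 3) ∧
  (segOpen C (n 1) (n 2)).ncard ≤ 2 ∧ (segOpen C (n 3) (n 0)).ncard ≤ 2 ∧
  ¬((segOpen C (n 1) (n 2)).ncard = 2 ∧ (segOpen C (n 3) (n 0)).ncard = 2)

def IsShortWheel (G : SimpleGraph V) (u : V) (C : List V) : Prop :=
  (G.neighborSet u).ncard = 4 ∧ ∃ n, ShortWheelOn G u C n

/-- A short wheel which, if imbalanced (a segment of order 4), is proper with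
respect to the boundary set `B`: the interior of that segment avoids `B`. -/
def IsShortProperWheel (G : SimpleGraph V) (u : V) (C : List V) (B : Set V) : Prop :=
  (G.neighborSet u).ncard = 4 ∧ ∃ n, ShortWheelOn G u C n ∧
    ((segOpen C (n 1) (n 2)).ncard = 2 → segOpen C (n 1) (n 2) ∩ B = ∅) ∧
    ((segOpen C (n 3) (n 0)).ncard = 2 → segOpen C (n 3) (n 0) ∩ B = ∅)


open SimpleGraph
namespace PG

variable {V : Type*} {G : SimpleGraph V}

/-- `x` and `y` are joined by a walk inside `S`. -/
def Jn (G : SimpleGraph V) (S : Set V) (x y : V) : Prop :=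
  ∃ p : G.Walk x y, ∀ v ∈ p.support, v ∈ S

/-- `S` is (pre)connected. -/
def PC (G : SimpleGraph V) (S : Set V) : Prop := ∀ x ∈ S, ∀ y ∈ S, Jn G S x y

theorem Jn.refl {S : Set V} {x : V} (h : x ∈ S) : Jn G S x x := ⟨.nil, by simpa using h⟩

theorem Jn.symm {S : Set V} {x y : V} (h : Jn G S x y) : Jn G S y x := by
  obtain ⟨p, hp⟩ := h
  exact ⟨p.reverse, by simpa using hp⟩

theorem Jn.trans {S : Set V} {x y z : V} (h : Jn G S x y) (h' : Jn G S y z) : Jn G S x z := by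
  obtain ⟨p, hp⟩ := h
  obtain ⟨q, hq⟩ := h'
  refine ⟨p.append q, fun v hv => ?_⟩
  rw [Walk.mem_support_append_iff] at hv
  exact hv.elim (hp v) (hq v)

theorem Jn.mono {S T : Set V} {x y : V} (h : Jn G S x y) (hST : S ⊆ T) : Jn G T x y := by
  obtain ⟨p, hp⟩ := h
  exact ⟨p, fun v hv => hST (hp v hv)⟩

theorem Jn.adj {S : Set V} {x y : V} (h : G.Adj x y) (hx : x ∈ S) (hy : y ∈ S) : Jn G S x y :=
  ⟨h.toWalk, by simp [hx, hy]⟩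

theorem Jn.left {S : Set V} {x y : V} (h : Jn G S x y) : x ∈ S := by
  obtain ⟨p, hp⟩ := h
  exact hp _ p.start_mem_support

theorem Jn.right {S : Set V} {x y : V} (h : Jn G S x y) : y ∈ S := by
  obtain ⟨p, hp⟩ := h
  exact hp _ p.end_mem_support

theorem Jn.exit {S D : Set V} {x y : V} (h : Jn G S x y) (hx : x ∈ D) (hy : y ∉ D) :
    ∃ a ∈ D, ∃ b, b ∉ D ∧ G.Adj a b ∧ a ∈ S ∧ b ∈ S := by
  obtain ⟨p, hp⟩ := h
  obtain ⟨d, hd, h1, h2⟩ := p.exists_boundary_dart D hx hy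
  exact ⟨d.fst, h1, d.snd, h2, d.adj, hp _ (p.dart_fst_mem_support_of_mem_darts hd),
    hp _ (p.dart_snd_mem_support_of_mem_darts hd)⟩

theorem Jn.path {S : Set V} {x y : V} (h : Jn G S x y) :
    ∃ p : G.Walk x y, p.IsPath ∧ ∀ v ∈ p.support, v ∈ S := by
  classical
  obtain ⟨p, hp⟩ := h
  exact ⟨p.bypass, p.bypass_isPath, fun v hv => hp v (p.support_bypass_subset_support hv)⟩

theorem PC_iff {S : Set V} : (G.induce S).Preconnected ↔ PC G S := by
  constructor
  · intro h x hx y hy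
    obtain ⟨p⟩ := h ⟨x, hx⟩ ⟨y, hy⟩
    let q := p.map (Embedding.induce S).toHom
    refine ⟨q, fun v hv => ?_⟩
    have : v ∈ (p.map (Embedding.induce S).toHom).support := hv
    rw [Walk.support_map, List.mem_map] at this
    obtain ⟨w, _, rfl⟩ := this
    exact w.2
  · rintro h ⟨x, hx⟩ ⟨y, hy⟩
    obtain ⟨p, hp⟩ := h x hx y hy
    exact ⟨p.induce S hp⟩

theorem conn_of_PC {S : Set V} (h : PC G S) (hn : S.Nonempty) : (G.induce S).Connected := by
  have : Nonempty S := hn.to_subtype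
  exact ⟨PC_iff.2 h⟩

theorem PC_singleton (x : V) : PC G {x} := by
  intro a ha b hb
  obtain rfl : a = x := ha
  obtain rfl : b = a := hb
  exact Jn.refl rfl

theorem PC_union {S T : Set V} (hS : PC G S) (hT : PC G T)
    (h : ∃ a ∈ S, ∃ b ∈ T, G.Adj a b ∨ a = b) : PC G (S ∪ T) := by
  obtain ⟨a, ha, b, hb, hab⟩ := h
  have key : Jn G (S ∪ T) a b := by
    rcases hab with hab | rfl
    · exact Jn.adj hab (Or.inl ha) (Or.inr hb)
    · exact Jn.refl (Or.inl ha)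
  have h1 : ∀ x ∈ S ∪ T, Jn G (S ∪ T) x a := by
    rintro x (hx | hx)
    · exact (hS x hx a ha).mono Set.subset_union_left
    · exact ((hT x hx b hb).mono Set.subset_union_right).trans key.symm
  intro x hx y hy
  exact (h1 x hx).trans (h1 y hy).symm

/-- The component of `x` in `S`. -/
def Comp (G : SimpleGraph V) (S : Set V) (x : V) : Set V := {y | Jn G S x y}

theorem comp_sub {S : Set V} {x : V} : Comp G S x ⊆ S := fun _ hy => Jn.right hy

theorem comp_self {S : Set V} {x : V} (h : x ∈ S) : x ∈ Comp G S x := Jn.refl h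

theorem comp_closed {S : Set V} {x y z : V} (h : y ∈ Comp G S x) (hyz : G.Adj y z) (hz : z ∈ S) :
    z ∈ Comp G S x := Jn.trans h (Jn.adj hyz (comp_sub h) hz)

theorem comp_pc {S : Set V} {x : V} : PC G (Comp G S x) := by
  classical
  have key : ∀ y ∈ Comp G S x, Jn G (Comp G S x) x y := by
    rintro y ⟨p, hp⟩
    refine ⟨p, fun v hv => ⟨p.takeUntil v hv, fun w hw => hp w ?_⟩⟩
    exact p.support_takeUntil_subset_support hv hw
  intro y hy z hz
  exact (key y hy).symm.trans (key z hz)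

theorem Jn.cross {S X Y : Set V} {w z : V} (h : Jn G S w z) (hw : w ∈ X) (hz : z ∈ Y) :
    ∃ x ∈ X, ∃ y ∈ Y, ∃ P : G.Walk x y, P.IsPath ∧ (∀ v ∈ P.support, v ∈ S) ∧
      (∀ v ∈ P.support, v ∈ X → v = x) ∧ (∀ v ∈ P.support, v ∈ Y → v = y) := by
  classical
  have hex : ∃ n, ∃ x ∈ X, ∃ y ∈ Y, ∃ P : G.Walk x y, (∀ v ∈ P.support, v ∈ S) ∧ P.length = n := by
    obtain ⟨p, hp⟩ := h
    exact ⟨p.length, w, hw, z, hz, p, hp, rfl⟩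
  obtain ⟨x, hx, y, hy, P, hP, hl⟩ := Nat.find_spec hex
  have hmin : ∀ x' ∈ X, ∀ y' ∈ Y, ∀ Q : G.Walk x' y', (∀ v ∈ Q.support, v ∈ S) →
      P.length ≤ Q.length := by
    intro x' hx' y' hy' Q hQ
    rw [hl]
    exact Nat.find_min' hex ⟨x', hx', y', hy', Q, hQ, rfl⟩
  have hsub : ∀ v ∈ P.bypass.support, v ∈ S := fun v hv => hP v (P.support_bypass_subset_support hv)
  have hlen := P.length_bypass_le_length
  refine ⟨x, hx, y, hy, P.bypass, P.bypass_isPath, hsub, fun v hv hvX => ?_, fun v hv hvY => ?_⟩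
  · have h1 := hmin v hvX y hy (P.bypass.dropUntil v hv)
      (fun u hu => hsub u (P.bypass.support_dropUntil_subset_support hv hu))
    have h2 := congrArg Walk.length (P.bypass.take_spec hv)
    rw [Walk.length_append] at h2
    have h3 : (P.bypass.takeUntil v hv).length = 0 := by omega
    exact (Walk.eq_of_length_eq_zero h3).symm
  · have h1 := hmin x hx v hvY (P.bypass.takeUntil v hv)
      (fun u hu => hsub u (P.bypass.support_takeUntil_subset_support hv hu))
    have h2 := congrArg Walk.length (P.bypass.take_spec hv)
    rw [Walk.length_append] at h2
    have h3 : (P.bypass.dropUntil v hv).length = 0 := by omega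
    exact (Walk.eq_of_length_eq_zero h3)

/-- Interior of a walk. -/
def intr {x y : V} (p : G.Walk x y) : Set V := {v | v ∈ p.support ∧ v ≠ x ∧ v ≠ y}

theorem mid_of_append {x y z v : V} {p : G.Walk x y} {q : G.Walk y z} (h : (p.append q).IsPath)
    (h1 : v ∈ p.support) (h2 : v ∈ q.support) : v = y := by
  by_contra hne
  exact h.ne_of_mem_support_of_append hne h1 h2 rfl

theorem append_isPath {x y z : V} {p : G.Walk x y} {q : G.Walk y z} (hp : p.IsPath) (hq : q.IsPath)
    (h : ∀ v ∈ p.support, v ∈ q.support → v = y) : (p.append q).IsPath := by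
  rw [Walk.isPath_def, Walk.support_append, List.nodup_append']
  refine ⟨hp.support_nodup, hq.support_nodup.tail, fun v hv hv' => ?_⟩
  have h1 := h v hv (List.mem_of_mem_tail hv')
  subst h1
  have := hq.support_nodup
  rw [← Walk.cons_tail_support, List.nodup_cons] at this
  exact this.1 hv'

theorem intr_pc {x y : V} {p : G.Walk x y} (hp : p.IsPath) : PC G (intr p) := by
  intro v hv w hw
  obtain ⟨hv1, hv2, hv3⟩ := hv
  obtain ⟨hw1, hw2, hw3⟩ := hw
  obtain ⟨q, r, rfl⟩ := Walk.mem_support_iff_exists_append.1 hv1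
  rw [Walk.mem_support_append_iff] at hw1
  rcases hw1 with hw1 | hw1
  · obtain ⟨q1, q2, rfl⟩ := Walk.mem_support_iff_exists_append.1 hw1
    have hq := hp.of_append_left
    refine Jn.symm ⟨q2, fun u hu => ⟨by simp [hu], ?_, ?_⟩⟩
    · rintro rfl
      exact hw2 (mid_of_append hq q1.start_mem_support hu).symm
    · rintro rfl
      exact hv3 (mid_of_append hp (by simp [hu]) r.end_mem_support).symm
  · obtain ⟨r1, r2, rfl⟩ := Walk.mem_support_iff_exists_append.1 hw1
    have hr := hp.of_append_right
    refine ⟨r1, fun u hu => ⟨by simp [hu], ?_, ?_⟩⟩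
    · rintro rfl
      exact hv2 (mid_of_append hp q.start_mem_support (by simp [hu])).symm
    · rintro rfl
      exact hw3 (mid_of_append hr hu r2.end_mem_support).symm

/-- Internally disjoint, edge-disjoint paths. -/
structure DJ {x y : V} (p q : G.Walk x y) : Prop where
  p1 : p.IsPath
  p2 : q.IsPath
  vd : ∀ v ∈ p.support, v ∈ q.support → v = x ∨ v = y
  ed : ∀ e ∈ p.edges, e ∉ q.edges

theorem DJ.symm {x y : V} {p q : G.Walk x y} (h : DJ p q) : DJ q p :=
  ⟨h.p2, h.p1, fun v h1 h2 => h.vd v h2 h1, fun e h1 h2 => h.ed e h2 h1⟩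

theorem DJ.reverse {x y : V} {p q : G.Walk x y} (h : DJ p q) : DJ p.reverse q.reverse :=
  ⟨h.p1.reverse, h.p2.reverse, fun v h1 h2 => (h.vd v (by simpa using h1) (by simpa using h2)).symm,
    fun e h1 h2 => h.ed e (by simpa using h1) (by simpa using h2)⟩

theorem path_edge_intr {x y v : V} {p : G.Walk x y} (hp : p.IsPath) (hv : v ∈ intr p) :
    s(x, y) ∉ p.edges := by
  intro h
  have h1 := hp.eq_adj_toWalk_of_mem_edges h
  obtain ⟨h2, h3, h4⟩ := hv
  rw [h1] at h2
  simp at h2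
  tauto

theorem path_intr_or_edge {x y : V} {p : G.Walk x y} (hne : x ≠ y) :
    (intr p).Nonempty ∨ s(x, y) ∈ p.edges ∧ ∀ v ∈ p.support, v = x ∨ v = y := by
  by_cases h : (intr p).Nonempty
  · exact Or.inl h
  · right
    have h1 : ∀ v ∈ p.support, v = x ∨ v = y := by
      intro v hv
      by_contra hc
      push Not at hc
      exact h ⟨v, hv, hc⟩
    refine ⟨?_, h1⟩
    cases p with
    | nil => exact absurd rfl hne
    | cons hadj p =>
      rename_i w
      have := h1 w (by simp)
      rcases this with rfl | rfl
      · exact absurd rfl hadj.ne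
      · simp

theorem DJ.of_intr {x y v : V} {p q : G.Walk x y} (hp : p.IsPath) (hq : q.IsPath)
    (h : ∀ v ∈ p.support, v ∈ q.support → v = x ∨ v = y) (hv : v ∈ intr p) : DJ p q := by
  refine ⟨hp, hq, h, fun e he he' => ?_⟩
  induction e with
  | _ a b =>
    have hab := (p.adj_of_mem_edges he).ne
    have h1 := h a (p.fst_mem_support_of_mem_edges he) (q.fst_mem_support_of_mem_edges he')
    have h2 := h b (p.snd_mem_support_of_mem_edges he) (q.snd_mem_support_of_mem_edges he')
    have h3 := path_edge_intr hp hv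
    rcases h1 with rfl | rfl <;> rcases h2 with rfl | rfl
    · exact hab rfl
    · exact h3 he
    · exact h3 (Sym2.eq_swap ▸ he)
    · exact hab rfl

theorem DJ.intr_of_edge {x y : V} {p q : G.Walk x y} (h : DJ p q) (hne : x ≠ y) :
    (intr p).Nonempty ∨ (intr q).Nonempty := by
  rcases path_intr_or_edge (p := p) hne with h1 | h1
  · exact Or.inl h1
  rcases path_intr_or_edge (p := q) hne with h2 | h2
  · exact Or.inr h2
  exact absurd h2.1 (h.ed _ h1.1)

theorem length_of_intr {x y : V} {p : G.Walk x y} (h : (intr p).Nonempty) : 1 < p.length := by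
  obtain ⟨v, h1, h2, h3⟩ := h
  cases p with
  | nil => simp at h1; exact absurd h1 h2
  | cons hadj p =>
    cases p with
    | nil => simp at h1; tauto
    | cons _ _ => simp

theorem tail_mem {x y v : V} {p : G.Walk x y} (hp : p.IsPath) (h : v ∈ p.support.tail) :
    v ∈ p.support ∧ v ≠ x := by
  refine ⟨List.mem_of_mem_tail h, ?_⟩
  rintro rfl
  have := hp.support_nodup
  rw [← Walk.cons_tail_support, List.nodup_cons] at this
  exact this.1 h

theorem DJ.isCycle {x y : V} {p q : G.Walk x y} (h : DJ p q) (hne : x ≠ y) :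
    (p.append q.reverse).IsCycle := by
  apply h.p1.isCycle_append h.p2.reverse
  · intro v h1 h2
    have h1' := tail_mem h.p1 h1
    have h2' := tail_mem h.p2.reverse h2
    have := h.vd v h1'.1 (by simpa using h2'.1)
    tauto
  · rcases h.intr_of_edge hne with h1 | h1
    · exact Or.inl (length_of_intr h1)
    · right
      rw [Walk.length_reverse]
      exact length_of_intr h1

open Classical in
/-- Edge vector of a walk mod 2. -/
noncomputable def vec {x y : V} (p : G.Walk x y) : Sym2 V → ZMod 2 :=
  fun e => (p.edges.count e : ZMod 2)

theorem vec_append {x y z : V} (p : G.Walk x y) (q : G.Walk y z) :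
    vec (p.append q) = vec p + vec q := by
  funext e
  simp [vec]

theorem vec_reverse {x y : V} (p : G.Walk x y) : vec p.reverse = vec p := by
  funext e
  simp [vec]

/-- `p, q` are the two arcs of the cycle `c`. -/
structure Arcs {u x y : V} (c : G.Walk u u) (p q : G.Walk x y) : Prop where
  dj : DJ p q
  sup : ∀ v, v ∈ c.support ↔ v ∈ p.support ∨ v ∈ q.support
  edg : ∀ e, e ∈ c.edges ↔ e ∈ p.edges ∨ e ∈ q.edges
  vec : vec c = vec p + vec q

theorem Arcs.symm {u x y : V} {c : G.Walk u u} {p q : G.Walk x y} (h : Arcs c p q) : Arcs c q p :=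
  ⟨h.dj.symm, fun v => (h.sup v).trans or_comm, fun e => (h.edg e).trans or_comm,
    h.vec.trans (add_comm _ _)⟩

theorem Arcs.reverse {u x y : V} {c : G.Walk u u} {p q : G.Walk x y} (h : Arcs c p q) :
    Arcs c p.reverse q.reverse :=
  ⟨h.dj.reverse, fun v => by simpa using h.sup v, fun v => by simpa using h.edg v,
    by rw [vec_reverse, vec_reverse, h.vec]⟩

theorem DJ.arcs {x y : V} {p q : G.Walk x y} (h : DJ p q) : Arcs (p.append q.reverse) p q :=
  ⟨h, fun v => by simp [Walk.mem_support_append_iff], fun e => by simp, by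
    rw [vec_append, vec_reverse]⟩

theorem exists_arcs {u x y : V} {c : G.Walk u u} (hc : c.IsCycle) (hx : x ∈ c.support)
    (hy : y ∈ c.support) (hne : x ≠ y) : ∃ p q : G.Walk x y, Arcs c p q := by
  classical
  have hc' := hc.rotate hx
  have hy' : y ∈ (c.rotate x hx).support := by rwa [Walk.mem_support_rotate_iff]
  obtain ⟨p, q, hpq⟩ := Walk.mem_support_iff_exists_append.1 hy'
  have hcy : (p.append q).IsCycle := hpq ▸ hc'
  have hpp : p.IsPath := hcy.isPath_of_append_left (Walk.not_nil_of_ne hne.symm)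
  have hqq : q.IsPath := hcy.isPath_of_append_right (Walk.not_nil_of_ne hne)
  have hperm := (c.rotate_edges x hx).perm
  rw [hpq] at hperm
  refine ⟨p, q.reverse, ⟨hpp, hqq.reverse, ?_, ?_⟩, ?_, ?_, ?_⟩
  · intro v h1 h2
    by_contra hcon
    push Not at hcon
    have hnd := hcy.support_nodup
    rw [Walk.tail_support_append, List.nodup_append'] at hnd
    rw [Walk.mem_support_iff] at h1
    have h2' : v ∈ q.support := by simpa using h2
    rw [Walk.mem_support_iff] at h2'
    exact hnd.2.2 (h1.resolve_left hcon.1) (h2'.resolve_left hcon.2)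
  · intro e h1 h2
    have hnd := hcy.edges_nodup
    rw [Walk.edges_append, List.nodup_append'] at hnd
    exact hnd.2.2 h1 (by simpa using h2)
  · intro v
    rw [← Walk.mem_support_rotate_iff c x hx, hpq, Walk.mem_support_append_iff]
    simp
  · intro e
    rw [← hperm.mem_iff]
    simp
  · rw [vec_reverse, ← vec_append]
    funext e
    simp only [vec]
    rw [hperm.count_eq]

end PG

open SimpleGraph
namespace PG

variable {V : Type*} {G : SimpleGraph V}

/-- Recutting a cycle. -/
theorem Arcs.recut {u a b x y : V} {c : G.Walk u u} {A B : G.Walk a b} (h : Arcs c A B)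
    (hx : x ∈ intr A) (hy : y ∈ intr B) :
    ∃ p q : G.Walk x y, Arcs c p q ∧ a ∈ intr p ∧ b ∈ intr q := by
  obtain ⟨A1, A2, rfl⟩ := Walk.mem_support_iff_exists_append.1 hx.1
  obtain ⟨B1, B2, rfl⟩ := Walk.mem_support_iff_exists_append.1 hy.1
  obtain ⟨-, hxa, hxb⟩ := hx
  obtain ⟨-, hya, hyb⟩ := hy
  obtain ⟨⟨hA, hB, hvd, hed⟩, hsup, hedg, hvec⟩ := h
  have hA1 := hA.of_append_left
  have hA2 := hA.of_append_right
  have hB1 := hB.of_append_left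
  have hB2 := hB.of_append_right
  have mA : ∀ v, v ∈ A1.support → v ∈ A2.support → v = x := fun v => mid_of_append hA
  have mB : ∀ v, v ∈ B1.support → v ∈ B2.support → v = y := fun v => mid_of_append hB
  have bA : b ∉ A1.support := fun h => hxb (mA _ h A2.end_mem_support).symm
  have bB : b ∉ B1.support := fun h => hyb (mB _ h B2.end_mem_support).symm
  have aA : a ∉ A2.support := fun h => hxa (mA _ A1.start_mem_support h).symm
  have aB : a ∉ B2.support := fun h => hya (mB _ B1.start_mem_support h).symm
  simp only [Walk.mem_support_append_iff] at hvd
  have hap : a ∈ intr (A1.reverse.append B1) := ⟨by simp, Ne.symm hxa, Ne.symm hya⟩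
  have hbq : b ∈ intr (A2.append B2.reverse) := ⟨by simp, Ne.symm hxb, Ne.symm hyb⟩
  refine ⟨A1.reverse.append B1, A2.append B2.reverse, ⟨?_, ?_, ?_, ?_⟩, hap, hbq⟩
  · apply DJ.of_intr (v := a) _ _ _ hap
    · apply append_isPath hA1.reverse hB1
      intro v h1 h2
      have h1' : v ∈ A1.support := by simpa using h1
      rcases hvd v (Or.inl h1') (Or.inl h2) with rfl | rfl
      · rfl
      · exact absurd h2 bB
    · apply append_isPath hA2 hB2.reverse
      intro v h1 h2
      have h2' : v ∈ B2.support := by simpa using h2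
      rcases hvd v (Or.inr h1) (Or.inr h2') with rfl | rfl
      · exact absurd h1 aA
      · rfl
    · intro v h1 h2
      simp only [Walk.mem_support_append_iff, Walk.support_reverse, List.mem_reverse] at h1 h2
      rcases h1 with h1 | h1 <;> rcases h2 with h2 | h2
      · exact Or.inl (mA v h1 h2)
      · rcases hvd v (Or.inl h1) (Or.inr h2) with rfl | rfl
        · exact absurd h2 aB
        · exact absurd h1 bA
      · rcases hvd v (Or.inr h2) (Or.inl h1) with rfl | rfl
        · exact absurd h2 aA
        · exact absurd h1 bB
      · exact Or.inr (mB v h1 h2)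
  · intro v
    rw [hsup]
    simp only [Walk.mem_support_append_iff, Walk.support_reverse, List.mem_reverse]
    tauto
  · intro v
    rw [hedg]
    simp only [Walk.edges_append, Walk.edges_reverse, List.mem_append, List.mem_reverse]
    tauto
  · rw [hvec]
    simp only [vec_append, vec_reverse]
    abel

theorem around_aux {u w : V} {c : G.Walk u u} {N : Set V} (hw : w ∉ N) (n : ℕ) :
    ∀ (a b : V) (A B : G.Walk a b), A.length ≤ n → Arcs c A B → a ≠ b → a ∈ N → b ∈ N →
    w ∈ A.support → ∃ (a b : V) (A B : G.Walk a b), Arcs c A B ∧ a ≠ b ∧ a ∈ N ∧ b ∈ N ∧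
    w ∈ A.support ∧ ∀ v ∈ intr A, v ∉ N := by
  induction n with
  | zero =>
    intro a b A B hl _ hab
    exact absurd (Walk.eq_of_length_eq_zero (p := A) (by omega)) hab
  | succ n ih =>
    intro a b A B hl hA hab ha hb hwA
    by_cases hN : ∀ v ∈ intr A, v ∉ N
    · exact ⟨a, b, A, B, hA, hab, ha, hb, hwA, hN⟩
    push Not at hN
    obtain ⟨m, ⟨hm1, hma, hmb⟩, hmN⟩ := hN
    obtain ⟨A1, A2, rfl⟩ := Walk.mem_support_iff_exists_append.1 hm1
    obtain ⟨⟨hp1, hB, hvd, hed⟩, hsup, hedg, hvec⟩ := hA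
    have hA1 := hp1.of_append_left
    have hA2 := hp1.of_append_right
    have mA : ∀ v, v ∈ A1.support → v ∈ A2.support → v = m := fun v => mid_of_append hp1
    have bA : b ∉ A1.support := fun h => hmb (mA _ h A2.end_mem_support).symm
    have aA : a ∉ A2.support := fun h => hma (mA _ A1.start_mem_support h).symm
    simp only [Walk.mem_support_append_iff] at hvd
    have hl1 : A1.length ≠ 0 := fun h => hma (Walk.eq_of_length_eq_zero h).symm
    have hl2 : A2.length ≠ 0 := fun h => hmb (Walk.eq_of_length_eq_zero h)
    rw [Walk.length_append] at hl
    rw [Walk.mem_support_append_iff] at hwA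
    rcases hwA with hwA | hwA
    · refine ih a m A1 (B.append A2.reverse) (by omega) ⟨?_, ?_, ?_, ?_⟩ (Ne.symm hma) ha hmN hwA
      · apply DJ.symm
        apply DJ.of_intr (v := b) _ hA1 _ ⟨by simp, Ne.symm hab, Ne.symm hmb⟩
        · apply append_isPath hB hA2.reverse
          intro v h1 h2
          have h2' : v ∈ A2.support := by simpa using h2
          rcases hvd v (Or.inr h2') h1 with rfl | rfl
          · exact absurd h2' aA
          · rfl
        · intro v h1 h2
          simp only [Walk.mem_support_append_iff, Walk.support_reverse, List.mem_reverse] at h1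
          rcases h1 with h1 | h1
          · rcases hvd v (Or.inl h2) h1 with rfl | rfl
            · exact Or.inl rfl
            · exact absurd h2 bA
          · exact Or.inr (mA v h2 h1)
      · intro v
        rw [hsup]
        simp only [Walk.mem_support_append_iff, Walk.support_reverse, List.mem_reverse]
        tauto
      · intro v
        rw [hedg]
        simp only [Walk.edges_append, Walk.edges_reverse, List.mem_append, List.mem_reverse]
        tauto
      · rw [hvec]
        simp only [vec_append, vec_reverse]
        abel
    · refine ih m b A2 (A1.reverse.append B) (by omega) ⟨?_, ?_, ?_, ?_⟩ hmb hmN hb hwA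
      · apply DJ.symm
        apply DJ.of_intr (v := a) _ hA2 _ ⟨by simp, Ne.symm hma, hab⟩
        · apply append_isPath hA1.reverse hB
          intro v h1 h2
          have h1' : v ∈ A1.support := by simpa using h1
          rcases hvd v (Or.inl h1') h2 with rfl | rfl
          · rfl
          · exact absurd h1' bA
        · intro v h1 h2
          simp only [Walk.mem_support_append_iff, Walk.support_reverse, List.mem_reverse] at h1
          rcases h1 with h1 | h1
          · exact Or.inl (mA v h1 h2)
          · rcases hvd v (Or.inr h2) h1 with rfl | rfl
            · exact absurd h2 aA
            · exact Or.inr rfl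
      · intro v
        rw [hsup]
        simp only [Walk.mem_support_append_iff, Walk.support_reverse, List.mem_reverse]
        tauto
      · intro v
        rw [hedg]
        simp only [Walk.edges_append, Walk.edges_reverse, List.mem_append, List.mem_reverse]
        tauto
      · rw [hvec]
        simp only [vec_append, vec_reverse]
        abel

theorem around {u w n1 n2 : V} {c : G.Walk u u} {N : Set V} (hc : c.IsCycle) (hw : w ∈ c.support)
    (hwN : w ∉ N) (h1 : n1 ∈ N) (h2 : n2 ∈ N) (h1c : n1 ∈ c.support) (h2c : n2 ∈ c.support)
    (hne : n1 ≠ n2) : ∃ (a b : V) (A B : G.Walk a b), Arcs c A B ∧ a ≠ b ∧ a ∈ N ∧ b ∈ N ∧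
    w ∈ intr A ∧ ∀ v ∈ intr A, v ∉ N := by
  obtain ⟨p, q, hpq⟩ := exists_arcs hc h1c h2c hne
  have key : ∃ (a b : V) (A B : G.Walk a b), Arcs c A B ∧ a ≠ b ∧ a ∈ N ∧ b ∈ N ∧
    w ∈ A.support ∧ ∀ v ∈ intr A, v ∉ N := by
    rcases (hpq.sup w).1 hw with h | h
    · exact around_aux hwN _ _ _ p q le_rfl hpq hne h1 h2 h
    · exact around_aux hwN _ _ _ q p le_rfl hpq.symm hne h1 h2 h
  obtain ⟨a, b, A, B, h3, h4, h5, h6, h7, h8⟩ := key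
  exact ⟨a, b, A, B, h3, h4, h5, h6, ⟨h7, fun h => hwN (h ▸ h5), fun h => hwN (h ▸ h6)⟩, h8⟩

/-- Peripheral cycles: induced and non-separating. -/
structure Per {u : V} (c : G.Walk u u) : Prop where
  cyc : c.IsCycle
  ind : ∀ a ∈ c.support, ∀ b ∈ c.support, G.Adj a b → s(a, b) ∈ c.edges
  sep : PC G {v | v ∉ c.support}

/-- Span of the peripheral cycles. -/
def PS (G : SimpleGraph V) : Submodule (ZMod 2) (Sym2 V → ZMod 2) :=
  Submodule.span (ZMod 2) {f | ∃ (u : V) (c : G.Walk u u), Per c ∧ f = vec c}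

/-- 3-connectedness (separation part). -/
def C3 (G : SimpleGraph V) : Prop :=
  ∀ s t x y : V, x ≠ s → x ≠ t → y ≠ s → y ≠ t → Jn G {v | v ≠ s ∧ v ≠ t} x y

/-- Cycles avoiding a connected set with more than `n` vertices are generated. -/
def IHn (G : SimpleGraph V) (n : ℕ) : Prop :=
  ∀ (u : V) (c : G.Walk u u), c.IsCycle → ∀ K : Set V, PC G K → (∀ v ∈ K, v ∉ c.support) →
    n < K.ncard → vec c ∈ PS G

theorem vadd_self (f : Sym2 V → ZMod 2) : f + f = 0 := by
  funext e
  exact CharTwo.add_self_eq_zero (f e)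

theorem split_vec {u x y : V} {c : G.Walk u u} {p q P : G.Walk x y} (h : Arcs c p q)
    (h1 : vec (p.append P.reverse) ∈ PS G) (h2 : vec (q.append P.reverse) ∈ PS G) :
    vec c ∈ PS G := by
  have : vec c = vec (p.append P.reverse) + vec (q.append P.reverse) := by
    rw [h.vec]
    simp only [vec_append, vec_reverse]
    calc vec p + vec q = vec p + vec q + 0 := by rw [add_zero]
      _ = vec p + vec q + (vec P + vec P) := by rw [vadd_self]
      _ = _ := by abel
  rw [this]
  exact (PS G).add_mem h1 h2

/-- One half of the splitting step: the connected set grows by the vertex `z`. -/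
theorem half_split [Finite V] {x y z : V} {n : ℕ} (ih : IHn G n) {K : Set V} (hK : PC G K)
    (hKn : n ≤ K.ncard) {p P : G.Walk x y} (hne : x ≠ y) (hd : DJ p P)
    (hKp : ∀ v ∈ K, v ∉ p.support) (hKP : ∀ v ∈ K, v ∉ P.support)
    (hz : z ∉ K) (hzp : z ∉ p.support) (hzP : z ∉ P.support)
    (hadj : K = ∅ ∨ ∃ k ∈ K, G.Adj k z) : vec (p.append P.reverse) ∈ PS G := by
  refine ih x _ (hd.isCycle hne) (K ∪ {z}) ?_ ?_ ?_
  · rcases hadj with rfl | ⟨k, hk, hkz⟩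
    · rw [Set.empty_union]
      exact PC_singleton z
    · exact PC_union hK (PC_singleton z) ⟨k, hk, z, rfl, Or.inl hkz⟩
  · rintro v (hv | rfl)
    · simp [Walk.mem_support_append_iff, hKp v hv, hKP v hv]
    · simp [Walk.mem_support_append_iff, hzp, hzP]
  · rw [Set.union_singleton, Set.ncard_insert_of_notMem hz (Set.toFinite _)]
    omega

/-- The splitting step. -/
theorem split_step [Finite V] {u x y : V} {n : ℕ} (ih : IHn G n) {K : Set V} (hK : PC G K)
    (hKn : n ≤ K.ncard) {c : G.Walk u u} {p q P : G.Walk x y} (hne : x ≠ y) (h : Arcs c p q)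
    (hP : P.IsPath) (hPc : ∀ v ∈ P.support, v ∈ c.support → v = x ∨ v = y)
    (hKc : ∀ v ∈ K, v ∉ c.support) (hKP : ∀ v ∈ K, v ∉ P.support)
    (h1 : ∃ z ∈ intr p, K = ∅ ∨ ∃ k ∈ K, G.Adj k z)
    (h2 : ∃ z ∈ intr q, K = ∅ ∨ ∃ k ∈ K, G.Adj k z) : vec c ∈ PS G := by
  obtain ⟨z1, hz1, hk1⟩ := h1
  obtain ⟨z2, hz2, hk2⟩ := h2
  have pc : ∀ v ∈ p.support, v ∈ c.support := fun v hv => (h.sup v).2 (Or.inl hv)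
  have qc : ∀ v ∈ q.support, v ∈ c.support := fun v hv => (h.sup v).2 (Or.inr hv)
  have d1 : DJ p P := DJ.of_intr h.dj.p1 hP (fun v hv hv' => hPc v hv' (pc v hv)) hz1
  have d2 : DJ q P := DJ.of_intr h.dj.p2 hP (fun v hv hv' => hPc v hv' (qc v hv)) hz2
  apply split_vec (P := P) h
  · refine half_split ih hK hKn hne d1 (fun v hv h => hKc v hv (pc v h)) hKP (z := z2) ?_ ?_ ?_ hk2
    · exact fun h => hKc _ h (qc _ hz2.1)
    · intro h'
      have := h.dj.vd _ h' hz2.1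
      have := hz2.2
      tauto
    · intro h'
      have := hPc _ h' (qc _ hz2.1)
      have := hz2.2
      tauto
  · refine half_split ih hK hKn hne d2 (fun v hv h => hKc v hv (qc v h)) hKP (z := z1) ?_ ?_ ?_ hk1
    · exact fun h => hKc _ h (pc _ hz1.1)
    · intro h'
      have := h.dj.vd _ hz1.1 h'
      have := hz1.2
      tauto
    · intro h'
      have := hPc _ h' (pc _ hz1.1)
      have := hz1.2
      tauto

/-- Chord case. -/
theorem chord_step [Finite V] {u x y : V} {n : ℕ} (ih : IHn G n) {K : Set V} (hK : PC G K)
    (hKn : n ≤ K.ncard) {c : G.Walk u u} (hc : c.IsCycle) (hKc : ∀ v ∈ K, v ∉ c.support)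
    (hx : x ∈ c.support) (hy : y ∈ c.support) (hxy : G.Adj x y) (he : s(x, y) ∉ c.edges)
    (hall : ∀ z ∈ c.support, K = ∅ ∨ ∃ k ∈ K, G.Adj k z) : vec c ∈ PS G := by
  obtain ⟨p, q, h⟩ := exists_arcs hc hx hy hxy.ne
  have hp : (intr p).Nonempty := by
    rcases path_intr_or_edge (p := p) hxy.ne with h' | h'
    · exact h'
    · exact absurd ((h.edg _).2 (Or.inl h'.1)) he
  have hq : (intr q).Nonempty := by
    rcases path_intr_or_edge (p := q) hxy.ne with h' | h'
    · exact h'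
    · exact absurd ((h.edg _).2 (Or.inr h'.1)) he
  obtain ⟨z1, hz1⟩ := hp
  obtain ⟨z2, hz2⟩ := hq
  refine split_step ih hK hKn hxy.ne h (P := hxy.toWalk) (Walk.IsPath.of_adj hxy) ?_ hKc ?_
    ⟨z1, hz1, hall _ ((h.sup _).2 (Or.inl hz1.1))⟩ ⟨z2, hz2, hall _ ((h.sup _).2 (Or.inr hz2.1))⟩
  · intro v hv _
    simpa using hv
  · intro v hv hv'
    have : v = x ∨ v = y := by simpa using hv'
    rcases this with rfl | rfl
    · exact hKc _ hv hx
    · exact hKc _ hv hy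

end PG

open SimpleGraph
namespace PG

variable {V : Type*} {G : SimpleGraph V}

theorem path_through {W : Set V} {z1 z2 w1 w2 : V} (hW : PC G W) (h1 : w1 ∈ W) (h2 : w2 ∈ W)
    (ha1 : G.Adj z1 w1) (ha2 : G.Adj z2 w2) (hz1 : z1 ∉ W) (hz2 : z2 ∉ W) (hne : z1 ≠ z2) :
    ∃ P : G.Walk z1 z2, P.IsPath ∧ w1 ∈ intr P ∧ ∀ v ∈ P.support, v = z1 ∨ v = z2 ∨ v ∈ W := by
  obtain ⟨Q, hQ, hQW⟩ := (hW w1 h1 w2 h2).path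
  have hp : (Q.append ha2.symm.toWalk).IsPath := by
    apply append_isPath hQ (Walk.IsPath.of_adj ha2.symm)
    intro v hv hv'
    have : v = w2 ∨ v = z2 := by simpa using hv'
    rcases this with rfl | rfl
    · rfl
    · exact absurd (hQW _ hv) hz2
  refine ⟨Walk.cons ha1 (Q.append ha2.symm.toWalk), ?_, ?_, ?_⟩
  · rw [Walk.cons_isPath_iff]
    refine ⟨hp, fun h => ?_⟩
    rw [Walk.mem_support_append_iff] at h
    rcases h with h | h
    · exact hz1 (hQW _ h)
    · have : z1 = w2 ∨ z1 = z2 := by simpa using h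
      rcases this with rfl | rfl
      · exact hz1 h2
      · exact hne rfl
  · refine ⟨?_, ?_, ?_⟩
    · rw [Walk.support_cons, List.mem_cons, Walk.mem_support_append_iff]
      simp
    · rintro rfl; exact hz1 h1
    · rintro rfl; exact hz2 h1
  · intro v hv
    rw [Walk.support_cons, List.mem_cons, Walk.mem_support_append_iff] at hv
    rcases hv with h | h | h
    · exact Or.inl h
    · exact Or.inr (Or.inr (hQW _ h))
    · have : v = w2 ∨ v = z2 := by simpa using h
      rcases this with rfl | rfl
      · exact Or.inr (Or.inr h2)
      · exact Or.inr (Or.inl rfl)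

theorem bridge_off_aux [Finite V] {u z1 z2 z3 : V} {n : ℕ} (ih : IHn G n) {K W : Set V}
    (hK : PC G K) (hKn : n ≤ K.ncard) {c : G.Walk u u} {p q : G.Walk z1 z2} (h : Arcs c p q)
    (hne : z1 ≠ z2) (h3 : z3 ∈ intr q) (hKc : ∀ v ∈ K, v ∉ c.support) (hW : PC G W)
    (hWc : ∀ v ∈ W, v ∉ c.support) (hWK : ∀ v ∈ W, v ∉ K)
    (hw1 : ∃ w ∈ W, G.Adj z1 w) (hw2 : ∃ w ∈ W, G.Adj z2 w) (hw3 : ∃ w ∈ W, G.Adj z3 w)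
    (hk1 : ∃ k ∈ K, G.Adj k z1) (hk2 : ∃ k ∈ K, G.Adj k z2) (hk3 : ∃ k ∈ K, G.Adj k z3) :
    vec c ∈ PS G := by
  have pc : ∀ v ∈ p.support, v ∈ c.support := fun v hv => (h.sup v).2 (Or.inl hv)
  have qc : ∀ v ∈ q.support, v ∈ c.support := fun v hv => (h.sup v).2 (Or.inr hv)
  obtain ⟨w1, hw1, ha1⟩ := hw1
  obtain ⟨w2, hw2, ha2⟩ := hw2
  obtain ⟨w3, hw3, ha3⟩ := hw3
  have z1c := pc _ p.start_mem_support
  have z2c := pc _ p.end_mem_support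
  have z3c := qc _ h3.1
  obtain ⟨P, hP, hwP, hPW⟩ := path_through hW hw1 hw2 ha1 ha2 (fun h => hWc _ h z1c)
    (fun h => hWc _ h z2c) hne
  have hPc : ∀ v ∈ P.support, v ∈ c.support → v = z1 ∨ v = z2 := by
    intro v hv hv'
    rcases hPW v hv with h | h | h
    · exact Or.inl h
    · exact Or.inr h
    · exact absurd hv' (hWc _ h)
  have hKP : ∀ v ∈ K, v ∉ P.support := by
    intro v hv hv'
    rcases hPW v hv' with rfl | rfl | h
    · exact hKc _ hv z1c
    · exact hKc _ hv z2c
    · exact hWK _ h hv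
  have d1 : DJ p P := (DJ.of_intr hP h.dj.p1 (fun v hv hv' => hPc v hv (pc v hv')) hwP).symm
  have d2 : DJ q P := (DJ.of_intr hP h.dj.p2 (fun v hv hv' => hPc v hv (qc v hv')) hwP).symm
  apply split_vec (P := P) h
  · refine half_split ih hK hKn hne d1 (fun v hv h => hKc v hv (pc v h)) hKP (z := z3)
      (fun h => hKc _ h z3c) ?_ ?_ (Or.inr hk3)
    · intro h'
      have := h.dj.vd _ h' h3.1
      have := h3.2
      tauto
    · intro h'
      have := hPc _ h' z3c
      have := h3.2
      tauto
  · have hj : Jn G (W ∪ {z3}) z3 w1 :=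
      (Jn.adj ha3 (Or.inr rfl) (Or.inl hw3)).trans ((hW w3 hw3 w1 hw1).mono Set.subset_union_left)
    obtain ⟨x, rfl, y, hy, R, hR, hRS, -, hRY⟩ := hj.cross (X := {z3}) (Y := intr P) rfl hwP
    obtain ⟨p', q', ha, hi1, hi2⟩ := d2.arcs.recut h3 hy
    have hyW : y ∈ W := by
      rcases hPW y hy.1 with h | h | h
      · exact absurd h hy.2.1
      · exact absurd h hy.2.2
      · exact h
    refine split_step ih hK hKn ?_ ha hR ?_ ?_ ?_ ⟨_, hi1, Or.inr hk1⟩ ⟨_, hi2, Or.inr hk2⟩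
    · rintro rfl
      exact hWc _ hyW z3c
    · intro v hv hv'
      have hv' : v ∈ q.support ∨ v ∈ P.support := by
        simpa [Walk.mem_support_append_iff] using hv'
      rcases hRS v hv with hvW | h
      · rcases hv' with h' | h'
        · exact absurd (qc _ h') (hWc _ hvW)
        · right
          apply hRY v hv
          refine ⟨h', ?_, ?_⟩
          · rintro rfl; exact hWc _ hvW z1c
          · rintro rfl; exact hWc _ hvW z2c
      · exact Or.inl h
    · intro v hv hv'
      have hv' : v ∈ q.support ∨ v ∈ P.support := by
        simpa [Walk.mem_support_append_iff] using hv'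
      rcases hv' with h' | h'
      · exact hKc _ hv (qc _ h')
      · exact hKP _ hv h'
    · intro v hv hv'
      rcases hRS v hv' with h | rfl
      · exact hWK _ h hv
      · exact hKc _ hv z3c

theorem bridge_off [Finite V] {u z1 z2 z3 : V} {n : ℕ} (ih : IHn G n) {K W : Set V}
    (hK : PC G K) (hKn : n ≤ K.ncard) {c : G.Walk u u} (hc : c.IsCycle)
    (z1c : z1 ∈ c.support) (z2c : z2 ∈ c.support) (z3c : z3 ∈ c.support)
    (h12 : z1 ≠ z2) (h31 : z3 ≠ z1) (h32 : z3 ≠ z2)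
    (hKc : ∀ v ∈ K, v ∉ c.support) (hW : PC G W)
    (hWc : ∀ v ∈ W, v ∉ c.support) (hWK : ∀ v ∈ W, v ∉ K)
    (hw1 : ∃ w ∈ W, G.Adj z1 w) (hw2 : ∃ w ∈ W, G.Adj z2 w) (hw3 : ∃ w ∈ W, G.Adj z3 w)
    (hk1 : ∃ k ∈ K, G.Adj k z1) (hk2 : ∃ k ∈ K, G.Adj k z2) (hk3 : ∃ k ∈ K, G.Adj k z3) :
    vec c ∈ PS G := by
  obtain ⟨p, q, h⟩ := exists_arcs hc z1c z2c h12
  rcases (h.sup z3).1 z3c with h' | h'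
  · exact bridge_off_aux ih hK hKn h.symm h12 ⟨h', h31, h32⟩ hKc hW hWc hWK hw1 hw2 hw3 hk1 hk2 hk3
  · exact bridge_off_aux ih hK hKn h h12 ⟨h', h31, h32⟩ hKc hW hWc hWK hw1 hw2 hw3 hk1 hk2 hk3

theorem bridge_on [Finite V] {u a b w z : V} {n : ℕ} (ih : IHn G n) {K W : Set V}
    (hK : PC G K) (hKn : n ≤ K.ncard) {c : G.Walk u u} {A B : G.Walk a b} (h : Arcs c A B)
    (hKc : ∀ v ∈ K, v ∉ c.support) (hW : PC G W) (hWK : ∀ v ∈ W, v ∉ K)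
    (haW : a ∉ W) (hbW : b ∉ W) (hw : w ∈ intr A) (hwW : w ∈ W) (hz : z ∈ intr B)
    (hzW : ∃ w ∈ W, G.Adj z w)
    (hk1 : ∃ k ∈ K, G.Adj k a) (hk2 : ∃ k ∈ K, G.Adj k b) :
    vec c ∈ PS G := by
  have Ac : ∀ v ∈ A.support, v ∈ c.support := fun v hv => (h.sup v).2 (Or.inl hv)
  have Bc : ∀ v ∈ B.support, v ∈ c.support := fun v hv => (h.sup v).2 (Or.inr hv)
  obtain ⟨w3, hw3, ha3⟩ := hzW
  have hj : Jn G (W ∪ {z}) w z :=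
    ((hW w hwW w3 hw3).mono Set.subset_union_left).trans (Jn.adj ha3.symm (Or.inl hw3) (Or.inr rfl))
  obtain ⟨x, hx, y, hy, R, hR, hRS, hRX, hRY⟩ := hj.cross hw hz
  obtain ⟨p', q', ha, hi1, hi2⟩ := h.recut hx hy
  refine split_step ih hK hKn ?_ ha hR ?_ hKc ?_ ⟨_, hi1, Or.inr hk1⟩ ⟨_, hi2, Or.inr hk2⟩
  · rintro rfl
    have := h.dj.vd _ hx.1 hy.1
    have := hx.2
    tauto
  · intro v hv hv'
    have hva : v ≠ a := by
      rintro rfl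
      rcases hRS _ hv with h' | h'
      · exact haW h'
      · exact hz.2.1 h'.symm
    have hvb : v ≠ b := by
      rintro rfl
      rcases hRS _ hv with h' | h'
      · exact hbW h'
      · exact hz.2.2 h'.symm
    rcases (h.sup v).1 hv' with h' | h'
    · exact Or.inl (hRX v hv ⟨h', hva, hvb⟩)
    · exact Or.inr (hRY v hv ⟨h', hva, hvb⟩)
  · intro v hv hv'
    rcases hRS v hv' with h | rfl
    · exact hWK _ h hv
    · exact hKc _ hv (Bc _ hz.1)

theorem tutte_step [Finite V] {u : V} (h3 : C3 G) {c : G.Walk u u} (hc : c.IsCycle) {K : Set V}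
    (hK : PC G K) (hKc : ∀ v ∈ K, v ∉ c.support) (ih : IHn G K.ncard) : vec c ∈ PS G := by
  by_cases hgrow : ∃ v, v ∉ c.support ∧ v ∉ K ∧ (K = ∅ ∨ ∃ k ∈ K, G.Adj k v)
  · obtain ⟨v, hvc, hvK, hadj⟩ := hgrow
    refine ih _ c hc (K ∪ {v}) ?_ ?_ ?_
    · rcases hadj with rfl | ⟨k, hk, hkz⟩
      · rw [Set.empty_union]
        exact PC_singleton v
      · exact PC_union hK (PC_singleton v) ⟨k, hk, v, rfl, Or.inl hkz⟩
    · rintro w (hw | rfl)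
      · exact hKc _ hw
      · exact hvc
    · rw [Set.union_singleton, Set.ncard_insert_of_notMem hvK (Set.toFinite _)]
      omega
  push Not at hgrow
  by_cases hU : ∃ w, w ∉ K ∧ K ≠ ∅ ∧ ∀ k ∈ K, ¬ G.Adj k w
  swap
  · push Not at hU
    by_cases hch : ∀ a ∈ c.support, ∀ b ∈ c.support, G.Adj a b → s(a, b) ∈ c.edges
    · apply Submodule.subset_span
      refine ⟨u, c, ⟨hc, hch, ?_⟩, rfl⟩
      have : {v | v ∉ c.support} = K := by
        ext v
        refine ⟨fun hv => ?_, hKc v⟩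
        by_contra hvK
        obtain ⟨h1, h2⟩ := hgrow v hv hvK
        obtain ⟨k, hk, hk'⟩ := hU v hvK h1
        exact h2 k hk hk'
      rw [this]
      exact hK
    · push Not at hch
      obtain ⟨x, hx, y, hy, hxy, he⟩ := hch
      refine chord_step ih hK le_rfl hc hKc hx hy hxy he fun z hz => ?_
      by_cases hK0 : K = ∅
      · exact Or.inl hK0
      · exact Or.inr (hU z (fun h => hKc _ h hz) (Set.nonempty_iff_ne_empty.2 hK0))
  obtain ⟨w, hwK, hK0, hwa⟩ := hU
  obtain ⟨k, hk⟩ := Set.nonempty_iff_ne_empty.2 hK0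
  have hKN : ∀ v, v ∉ K → (∃ k ∈ K, G.Adj k v) → v ∈ c.support := by
    rintro v hv ⟨k, hk, hkv⟩
    by_contra hvc
    exact (hgrow v hvc hv).2 k hk hkv
  set U : Set V := {v | v ∉ K ∧ ∀ k ∈ K, ¬ G.Adj k v} with hUdef
  have hwU : w ∈ U := ⟨hwK, hwa⟩
  set W := Comp G U w with hWdef
  have hWU : ∀ v ∈ W, v ∈ U := fun v hv => comp_sub hv
  have hwW : w ∈ W := comp_self hwU
  -- boundary vertices of `W`
  have hbd : ∀ s t : V, s ≠ w → t ≠ w → s ≠ k → t ≠ k → ∃ z, z ≠ s ∧ z ≠ t ∧ z ∈ c.support ∧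
      (∃ w ∈ W, G.Adj z w) ∧ (∃ k ∈ K, G.Adj k z) := by
    intro s t hs ht hsk htk
    have hj := h3 s t w k hs.symm ht.symm hsk.symm htk.symm
    obtain ⟨a, ha, b, hb, hab, -, hbs⟩ := hj.exit (D := W) hwW (fun h => (hWU _ h).1 hk)
    have hbU : b ∉ U := fun h => hb (comp_closed ha hab h)
    have hbK : b ∉ K := fun h => (hWU _ ha).2 b h hab.symm
    have : ∃ k ∈ K, G.Adj k b := by
      by_contra hcon
      push Not at hcon
      exact hbU ⟨hbK, hcon⟩
    exact ⟨b, hbs.1, hbs.2, hKN b hbK this, ⟨a, ha, hab.symm⟩, this⟩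
  have hNW : ∀ z, (∃ k ∈ K, G.Adj k z) → z ∉ W := by
    rintro z ⟨k, hk, hkz⟩ hz
    exact (hWU _ hz).2 k hk hkz
  have hne : ∀ z, z ∈ c.support → (∃ k ∈ K, G.Adj k z) → z ≠ w ∧ z ≠ k := by
    intro z hzc hz
    refine ⟨?_, ?_⟩
    · rintro rfl; exact hNW _ hz hwW
    · rintro rfl; exact hKc _ hk hzc
  have hz1 : ∃ z, z ∈ c.support ∧ (∃ w ∈ W, G.Adj z w) ∧ (∃ k ∈ K, G.Adj k z) := by
    obtain ⟨x, y, -⟩ : ∃ x y : V, x = y := ⟨w, w, rfl⟩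
    have hj : Jn G Set.univ w k := by
      by_cases hwk : ∃ s, s ≠ w ∧ s ≠ k
      · obtain ⟨s, hs1, hs2⟩ := hwk
        exact (h3 s s w k hs1.symm hs1.symm hs2.symm hs2.symm).mono (Set.subset_univ _)
      · push Not at hwk
        exfalso
        have hl := hc.three_le_length
        have hcs : ∀ v ∈ c.support, v = w := fun v hv => by
          by_contra h
          have := hwk v h
          subst this
          exact hKc _ hk hv
        have hadj : G.Adj (c.getVert 0) (c.getVert 1) := c.adj_getVert_succ (by omega)
        rw [hcs _ (c.getVert_mem_support 0), hcs _ (c.getVert_mem_support 1)] at hadj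
        exact hadj.ne rfl
    obtain ⟨a, ha, b, hb, hab, -, hbs⟩ := hj.exit (D := W) hwW (fun h => (hWU _ h).1 hk)
    have hbU : b ∉ U := fun h => hb (comp_closed ha hab h)
    have hbK : b ∉ K := fun h => (hWU _ ha).2 b h hab.symm
    have : ∃ k ∈ K, G.Adj k b := by
      by_contra hcon
      push Not at hcon
      exact hbU ⟨hbK, hcon⟩
    exact ⟨b, hKN b hbK this, ⟨a, ha, hab.symm⟩, this⟩
  obtain ⟨z1, z1c, z1W, z1K⟩ := hz1
  obtain ⟨n1w, n1k⟩ := hne z1 z1c z1K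
  obtain ⟨z2, h21, -, z2c, z2W, z2K⟩ := hbd z1 z1 n1w n1w n1k n1k
  obtain ⟨n2w, n2k⟩ := hne z2 z2c z2K
  obtain ⟨z3, h31, h32, z3c, z3W, z3K⟩ := hbd z1 z2 n1w n2w n1k n2k
  by_cases hWc : ∀ v ∈ W, v ∉ c.support
  · exact bridge_off ih hK le_rfl hc z1c z2c z3c h21.symm h31 h32 hKc comp_pc hWc
      (fun v hv => (hWU v hv).1) z1W z2W z3W z1K z2K z3K
  · push Not at hWc
    obtain ⟨w', hw'W, hw'c⟩ := hWc
    obtain ⟨a, b, A, B, hAB, hab, haN, hbN, hw'A, hAN⟩ :=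
      around (N := {v | ∃ k ∈ K, G.Adj k v}) hc hw'c (fun h => hNW _ h hw'W) z1K z2K z1c z2c
        h21.symm
    have hac := (hAB.sup a).2 (Or.inl A.start_mem_support)
    have hbc := (hAB.sup b).2 (Or.inl A.end_mem_support)
    obtain ⟨naw, nak⟩ := hne a hac haN
    obtain ⟨nbw, nbk⟩ := hne b hbc hbN
    obtain ⟨z, hza, hzb, hzc, hzW, hzK⟩ := hbd a b naw nbw nak nbk
    have hzB : z ∈ intr B := by
      rcases (hAB.sup z).1 hzc with h | h
      · exact absurd hzK (hAN z ⟨h, hza, hzb⟩)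
      · exact ⟨h, hza, hzb⟩
    exact bridge_on ih hK le_rfl hAB hKc comp_pc (fun v hv => (hWU v hv).1) (hNW _ haN) (hNW _ hbN)
      hw'A hw'W hzB hzW haN hbN

theorem tutte [Finite V] (h3 : C3 G) {u : V} {c : G.Walk u u} (hc : c.IsCycle) :
    vec c ∈ PS G := by
  have key : ∀ k n : ℕ, Nat.card V ≤ n + k → IHn G n := by
    intro k
    induction k with
    | zero =>
      intro n hn u c hc K _ _ hlt
      have := Set.ncard_le_card K
      omega
    | succ k ih =>
      intro n hn u c hc K hK hKc hlt
      exact tutte_step h3 hc hK hKc (ih _ (by omega))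
  exact tutte_step h3 hc (K := ∅) (fun x hx => absurd hx (by simp)) (fun x hx => absurd hx (by simp))
    (key (Nat.card V) _ (by omega))

end PG

open SimpleGraph
namespace PG

variable {V : Type*} {G : SimpleGraph V}

/-- Two sets are joined by an edge. -/
def Tch (G : SimpleGraph V) (S T : Set V) : Prop := ∃ a ∈ S, ∃ b ∈ T, G.Adj a b

theorem Tch.symm {S T : Set V} (h : Tch G S T) : Tch G T S := by
  obtain ⟨a, ha, b, hb, hab⟩ := h
  exact ⟨b, hb, a, ha, hab.symm⟩

theorem Tch.mono {S T S' T' : Set V} (h : Tch G S T) (h1 : S ⊆ S') (h2 : T ⊆ T') :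
    Tch G S' T' := by
  obtain ⟨a, ha, b, hb, hab⟩ := h
  exact ⟨a, h1 ha, b, h2 hb, hab⟩

def Dsj (S T : Set V) : Prop := ∀ v ∈ S, v ∉ T

theorem Dsj.symm {S T : Set V} (h : Dsj S T) : Dsj T S := fun v h1 h2 => h v h2 h1

theorem Dsj.disj {S T : Set V} (h : Dsj S T) : Disjoint S T := Set.disjoint_left.2 (fun v => h v)

theorem k33_of (A B : Fin 3 → Set V) (hA : ∀ i, PC G (A i)) (hB : ∀ i, PC G (B i))
    (hAA : ∀ i j, i < j → Dsj (A i) (A j)) (hBB : ∀ i j, i < j → Dsj (B i) (B j))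
    (hAB : ∀ i j, Dsj (A i) (B j)) (ht : ∀ i j, Tch G (A i) (B j)) :
    HasMinor G (completeBipartiteGraph (Fin 3) (Fin 3)) := by
  refine ⟨Sum.elim A B, ?_, ?_, ?_⟩
  · rintro (i | i)
    · obtain ⟨a, ha, -⟩ := ht i 0
      exact conn_of_PC (hA i) ⟨a, ha⟩
    · obtain ⟨-, -, b, hb, -⟩ := ht 0 i
      exact conn_of_PC (hB i) ⟨b, hb⟩
  · rintro (i | i) (j | j) hij
    · have hij : i ≠ j := fun h => hij (by rw [h])
      rcases lt_or_gt_of_ne hij with h | h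
      · exact (hAA i j h).disj
      · exact (hAA j i h).symm.disj
    · exact (hAB i j).disj
    · exact (hAB j i).symm.disj
    · have hij : i ≠ j := fun h => hij (by rw [h])
      rcases lt_or_gt_of_ne hij with h | h
      · exact (hBB i j h).disj
      · exact (hBB j i h).symm.disj
  · rintro (i | i) (j | j) hij
    · simp at hij
    · exact ht i j
    · exact (ht j i).symm
    · simp at hij

theorem k33_three {a z : V} {K X Y Z : Set V} (haz : a ≠ z) (hK : PC G K) (hX : PC G X)
    (hY : PC G Y) (hZ : PC G Z) (hXY : Dsj X Y) (hXZ : Dsj X Z) (hYZ : Dsj Y Z)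
    (hKX : Dsj K X) (hKY : Dsj K Y) (hKZ : Dsj K Z)
    (ha : a ∉ K ∧ a ∉ X ∧ a ∉ Y ∧ a ∉ Z) (hz : z ∉ K ∧ z ∉ X ∧ z ∉ Y ∧ z ∉ Z)
    (taX : Tch G {a} X) (taY : Tch G {a} Y) (taZ : Tch G {a} Z)
    (tzX : Tch G {z} X) (tzY : Tch G {z} Y) (tzZ : Tch G {z} Z)
    (tKX : Tch G K X) (tKY : Tch G K Y) (tKZ : Tch G K Z) :
    HasMinor G (completeBipartiteGraph (Fin 3) (Fin 3)) := by
  have sg : ∀ (x : V) (S : Set V), x ∉ S → Dsj {x} S := by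
    rintro x S h v rfl
    exact h
  refine k33_of ![{a}, {z}, K] ![X, Y, Z] ?_ ?_ ?_ ?_ ?_ ?_
  · intro i
    fin_cases i
    · exact PC_singleton a
    · exact PC_singleton z
    · exact hK
  · intro i
    fin_cases i
    · exact hX
    · exact hY
    · exact hZ
  · intro i j h
    fin_cases i <;> fin_cases j <;> simp at h
    · exact sg _ _ haz
    · exact sg _ _ ha.1
    · exact sg _ _ hz.1
  · intro i j h
    fin_cases i <;> fin_cases j <;> simp at h
    · exact hXY
    · exact hXZ
    · exact hYZ
  · intro i j
    fin_cases i <;> fin_cases j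
    · exact sg _ _ ha.2.1
    · exact sg _ _ ha.2.2.1
    · exact sg _ _ ha.2.2.2
    · exact sg _ _ hz.2.1
    · exact sg _ _ hz.2.2.1
    · exact sg _ _ hz.2.2.2
    · exact hKX
    · exact hKY
    · exact hKZ
  · intro i j
    fin_cases i <;> fin_cases j <;> assumption

theorem k5_three {a z : V} {X Y Z : Set V} (haz : G.Adj a z) (hX : PC G X)
    (hY : PC G Y) (hZ : PC G Z) (hXY : Dsj X Y) (hXZ : Dsj X Z) (hYZ : Dsj Y Z)
    (ha : a ∉ X ∧ a ∉ Y ∧ a ∉ Z) (hz : z ∉ X ∧ z ∉ Y ∧ z ∉ Z)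
    (taX : Tch G {a} X) (taY : Tch G {a} Y) (taZ : Tch G {a} Z)
    (tzX : Tch G {z} X) (tzY : Tch G {z} Y) (tzZ : Tch G {z} Z)
    (tXY : Tch G X Y) (tXZ : Tch G X Z) (tYZ : Tch G Y Z) :
    HasMinor G (completeGraph (Fin 5)) := by
  have sg : ∀ (x : V) (S : Set V), x ∉ S → Dsj {x} S := by
    rintro x S h v rfl
    exact h
  have taz : Tch G {a} {z} := ⟨a, rfl, z, rfl, haz⟩
  have key : ∀ i j : Fin 5, i < j → Dsj ((![{a}, {z}, X, Y, Z] : Fin 5 → Set V) i)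
      ((![{a}, {z}, X, Y, Z] : Fin 5 → Set V) j) ∧ Tch G ((![{a}, {z}, X, Y, Z] : Fin 5 → Set V) i)
      ((![{a}, {z}, X, Y, Z] : Fin 5 → Set V) j) := by
    intro i j h
    fin_cases i <;> fin_cases j <;> simp at h
    · exact ⟨sg _ _ haz.ne, taz⟩
    · exact ⟨sg _ _ ha.1, taX⟩
    · exact ⟨sg _ _ ha.2.1, taY⟩
    · exact ⟨sg _ _ ha.2.2, taZ⟩
    · exact ⟨sg _ _ hz.1, tzX⟩
    · exact ⟨sg _ _ hz.2.1, tzY⟩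
    · exact ⟨sg _ _ hz.2.2, tzZ⟩
    · exact ⟨hXY, tXY⟩
    · exact ⟨hXZ, tXZ⟩
    · exact ⟨hYZ, tYZ⟩
  refine ⟨![{a}, {z}, X, Y, Z], ?_, ?_, ?_⟩
  · intro i
    fin_cases i
    · exact conn_of_PC (PC_singleton a) ⟨a, rfl⟩
    · exact conn_of_PC (PC_singleton z) ⟨z, rfl⟩
    · obtain ⟨p, hp, -⟩ := tXY
      exact conn_of_PC hX ⟨p, hp⟩
    · obtain ⟨p, hp, -⟩ := tYZ
      exact conn_of_PC hY ⟨p, hp⟩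
    · obtain ⟨-, -, p, hp, -⟩ := tYZ
      exact conn_of_PC hZ ⟨p, hp⟩
  · intro i j hij
    rcases lt_or_gt_of_ne hij with h | h
    · exact (key i j h).1.disj
    · exact (key j i h).1.symm.disj
  · intro i j hij
    rcases lt_or_gt_of_ne hij.ne with h | h
    · exact (key i j h).2
    · exact (key j i h).2.symm

theorem intr_tch_left {x y : V} {p : G.Walk x y} (hp : p.IsPath) (h : (intr p).Nonempty) :
    Tch G {x} (intr p) := by
  obtain ⟨v, h1, h2, h3⟩ := h
  cases p with
  | nil => simp at h1; exact absurd h1 h2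
  | @cons _ m _ hadj p =>
    refine ⟨x, rfl, m, ⟨?_, hadj.ne.symm, ?_⟩, hadj⟩
    · simp
    · rintro rfl
      rw [Walk.cons_isPath_iff] at hp
      have hn := (Walk.isPath_iff_eq_nil).1 hp.1
      subst hn
      simp at h1
      tauto

theorem intr_reverse {x y : V} (p : G.Walk x y) : intr p.reverse = intr p := by
  ext v
  simp only [intr, Walk.support_reverse, List.mem_reverse, Set.mem_ofPred_eq]
  tauto

theorem intr_tch_right {x y : V} {p : G.Walk x y} (hp : p.IsPath) (h : (intr p).Nonempty) :
    Tch G {y} (intr p) := by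
  have := intr_tch_left hp.reverse (by rwa [intr_reverse])
  rwa [intr_reverse] at this

theorem cyc_nbr {u v : V} {c : G.Walk u u} (hc : c.IsCycle) (hv : v ∈ c.support) :
    ∃ p q, p ≠ q ∧ s(v, p) ∈ c.edges ∧ s(v, q) ∈ c.edges ∧ ∀ r, s(v, r) ∈ c.edges → r = p ∨ r = q := by
  have h := hc.ncard_neighborSet_toSubgraph_eq_two hv
  obtain ⟨p, q, hpq, hs⟩ := Set.ncard_eq_two.1 h
  have key : ∀ r, s(v, r) ∈ c.edges ↔ r ∈ ({p, q} : Set V) := by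
    intro r
    rw [← hs, Subgraph.mem_neighborSet, Walk.adj_toSubgraph_iff_mem_edges]
  exact ⟨p, q, hpq, (key p).2 (by simp), (key q).2 (by simp), fun r hr => (key r).1 hr⟩

theorem Arcs.intr_dsj {u x y : V} {c : G.Walk u u} {p q : G.Walk x y} (h : Arcs c p q) :
    Dsj (intr p) (intr q) := by
  rintro v ⟨h1, h2, h3⟩ ⟨h4, -, -⟩
  have := h.dj.vd v h1 h4
  tauto

/-- The two arcs of a peripheral cycle are not joined off a bridging path. -/
theorem no_cross {u a z r t : V} (hk : ¬ HasMinor G (completeBipartiteGraph (Fin 3) (Fin 3)))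
    {c : G.Walk u u} (hc : Per c) {R T A : G.Walk a z} (h : Arcs c R T) (hne : a ≠ z)
    (hA : A.IsPath) (hAi : (intr A).Nonempty) (hAc : ∀ v ∈ intr A, v ∉ c.support)
    (hr : r ∈ intr R) (ht : t ∈ intr T) : ¬ Jn G {v | v ∉ A.support} r t := by
  intro hj
  obtain ⟨x, hx, y, hy, P, hP, hPS, hPX, hPY⟩ := hj.cross hr ht
  have hxy : x ≠ y := by
    rintro rfl
    exact h.intr_dsj _ hx hy
  have Rc : ∀ v ∈ R.support, v ∈ c.support := fun v hv => (h.sup v).2 (Or.inl hv)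
  have Tc : ∀ v ∈ T.support, v ∈ c.support := fun v hv => (h.sup v).2 (Or.inr hv)
  rcases path_intr_or_edge (p := P) hxy with hi | hi
  swap
  · have hadj := P.adj_of_mem_edges hi.1
    rcases (h.edg _).1 (hc.ind x (Rc _ hx.1) y (Tc _ hy.1) hadj) with h' | h'
    · exact h.intr_dsj y ⟨R.snd_mem_support_of_mem_edges h', hy.2⟩ hy
    · exact h.intr_dsj x hx ⟨T.fst_mem_support_of_mem_edges h', hx.2⟩
  have hPc : ∀ v ∈ intr P, v ∉ c.support ∧ v ∉ A.support := by
    intro v hv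
    have hvA : v ∉ A.support := hPS v hv.1
    refine ⟨fun hvc => ?_, hvA⟩
    have hva : v ≠ a := by rintro rfl; exact hvA A.start_mem_support
    have hvz : v ≠ z := by rintro rfl; exact hvA A.end_mem_support
    rcases (h.sup v).1 hvc with h' | h'
    · exact hv.2.1 (hPX v hv.1 ⟨h', hva, hvz⟩)
    · exact hv.2.2 (hPY v hv.1 ⟨h', hva, hvz⟩)
  obtain ⟨m, hm⟩ := hi
  set S : Set V := {v | v ∉ c.support ∧ v ∉ A.support} with hS
  set K := Comp G S m with hKdef
  have hmK : m ∈ K := comp_self (hPc m hm)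
  have hPK : intr P ⊆ K := fun v hv => (intr_pc hP m hm v hv).mono hPc
  have hKS : ∀ v ∈ K, v ∈ S := fun v hv => comp_sub hv
  have tKR : Tch G K (intr R) := by
    obtain ⟨x', rfl, b, hb, hxb⟩ := intr_tch_left hP ⟨m, hm⟩
    exact ⟨b, hPK hb, x', hx, hxb.symm⟩
  have tKT : Tch G K (intr T) := by
    obtain ⟨x', rfl, b, hb, hxb⟩ := intr_tch_right hP ⟨m, hm⟩
    exact ⟨b, hPK hb, x', hy, hxb.symm⟩
  have tKA : Tch G K (intr A) := by
    obtain ⟨α, hα⟩ := hAi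
    obtain ⟨p, hp, q, hq, hpq, -, hqc⟩ := (hc.sep m (hPc m hm).1 α (hAc α hα)).exit (D := K) hmK
      (fun h => (hKS _ h).2 hα.1)
    refine ⟨p, hp, q, ⟨?_, ?_, ?_⟩, hpq⟩
    · by_contra hqA
      exact hq (comp_closed hp hpq ⟨hqc, hqA⟩)
    · rintro rfl; exact hqc (Rc _ R.start_mem_support)
    · rintro rfl; exact hqc (Rc _ R.end_mem_support)
  apply hk
  refine k33_three (a := a) (z := z) (K := K) (X := intr R) (Y := intr A) (Z := intr T) hne
    comp_pc (intr_pc h.dj.p1) (intr_pc hA) (intr_pc h.dj.p2) ?_ h.intr_dsj ?_ ?_ ?_ ?_ ?_ ?_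
    (intr_tch_left h.dj.p1 ⟨r, hr⟩) (intr_tch_left hA hAi) (intr_tch_left h.dj.p2 ⟨t, ht⟩)
    (intr_tch_right h.dj.p1 ⟨r, hr⟩) (intr_tch_right hA hAi) (intr_tch_right h.dj.p2 ⟨t, ht⟩)
    tKR tKA tKT
  · exact fun v hv hv' => hAc v hv' (Rc v hv.1)
  · exact fun v hv hv' => hAc v hv (Tc v hv'.1)
  · exact fun v hv hv' => (hKS v hv).1 (Rc v hv'.1)
  · exact fun v hv hv' => (hKS v hv).2 hv'.1
  · exact fun v hv hv' => (hKS v hv).1 (Tc v hv'.1)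
  · exact ⟨fun h => (hKS _ h).2 A.start_mem_support, fun h => h.2.1 rfl, fun h => h.2.1 rfl,
      fun h => h.2.1 rfl⟩
  · exact ⟨fun h => (hKS _ h).2 A.end_mem_support, fun h => h.2.2 rfl, fun h => h.2.2 rfl,
      fun h => h.2.2 rfl⟩

/-- Minimum degree at least three. -/
def D3 (G : SimpleGraph V) : Prop := ∀ v p q : V, ∃ n, G.Adj v n ∧ n ≠ p ∧ n ≠ q

theorem per_sub {u1 u2 x y : V} {c1 : G.Walk u1 u1} {c2 : G.Walk u2 u2} (h1 : Per c1) (h2 : Per c2)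
    (he2 : s(x, y) ∈ c2.edges) (hsub : ∀ v ∈ c2.support, v ∈ c1.support) :
    ∀ e, e ∈ c1.edges ↔ e ∈ c2.edges := by
  have hs : ∀ e ∈ c2.edges, e ∈ c1.edges := by
    intro e he
    induction e with
    | _ p q =>
      exact h1.ind p (hsub _ (c2.fst_mem_support_of_mem_edges he)) q
        (hsub _ (c2.snd_mem_support_of_mem_edges he)) (c2.adj_of_mem_edges he)
  by_cases hsub' : ∀ v ∈ c1.support, v ∈ c2.support
  · intro e
    refine ⟨fun he => ?_, hs e⟩
    induction e with
    | _ p q =>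
      exact h2.ind p (hsub' _ (c1.fst_mem_support_of_mem_edges he)) q
        (hsub' _ (c1.snd_mem_support_of_mem_edges he)) (c1.adj_of_mem_edges he)
  · exfalso
    push Not at hsub'
    obtain ⟨v, hv1, hv2⟩ := hsub'
    have hx2 := c2.fst_mem_support_of_mem_edges he2
    have hy2 := c2.snd_mem_support_of_mem_edges he2
    obtain ⟨a, b, A, B, hAB, hab, ha, hb, hvA, hA⟩ := around (N := {v | v ∈ c2.support}) h1.cyc hv1
      hv2 hx2 hy2 (hsub _ hx2) (hsub _ hy2) (c2.adj_of_mem_edges he2).ne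
    obtain ⟨p, q, hpq, hp, hq, -⟩ := cyc_nbr h2.cyc ha
    obtain ⟨p', q', -, -, -, hr⟩ := cyc_nbr h1.cyc (hsub _ ha)
    obtain ⟨a', rfl, m, hm, ham⟩ := intr_tch_left hAB.dj.p1 ⟨v, hvA⟩
    have hm1 : m ∈ c1.support := (hAB.sup m).2 (Or.inl hm.1)
    have hma := hr m (h1.ind a' (hsub _ ha) m hm1 ham)
    have hpa := hr p (hs _ hp)
    have hqa := hr q (hs _ hq)
    have hm2 : m ∉ c2.support := hA m hm
    have hmp : m ≠ p := by
      rintro rfl; exact hm2 (c2.snd_mem_support_of_mem_edges hp)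
    have hmq : m ≠ q := by
      rintro rfl; exact hm2 (c2.snd_mem_support_of_mem_edges hq)
    grind

theorem per_meet {u1 u2 x y w v : V} (hk : ¬ HasMinor G (completeBipartiteGraph (Fin 3) (Fin 3)))
    (h3 : D3 G) {c1 : G.Walk u1 u1} {c2 : G.Walk u2 u2} (h1 : Per c1) (h2 : Per c2)
    (he1 : s(x, y) ∈ c1.edges) (he2 : s(x, y) ∈ c2.edges) (hw1 : w ∈ c1.support)
    (hw2 : w ∈ c2.support) (hwx : w ≠ x) (hwy : w ≠ y) (hv2 : v ∈ c2.support) : v ∈ c1.support := by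
  by_contra hv1
  have hxy : x ≠ y := (c1.adj_of_mem_edges he1).ne
  have hx1 := c1.fst_mem_support_of_mem_edges he1
  have hy1 := c1.snd_mem_support_of_mem_edges he1
  have hx2 := c2.fst_mem_support_of_mem_edges he2
  have hy2 := c2.snd_mem_support_of_mem_edges he2
  obtain ⟨a, z, A, B, hAB, haz, ha1, hz1, hvA, hAc⟩ := around (N := {v | v ∈ c1.support}) h2.cyc hv2
      hv1 hx1 hy1 hx2 hy2 hxy
  have ha2 : a ∈ c2.support := (hAB.sup a).2 (Or.inl A.start_mem_support)
  have hz2 : z ∈ c2.support := (hAB.sup z).2 (Or.inl A.end_mem_support)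
  have hA1 : ∀ m ∈ A.support, m ∈ c1.support → m = a ∨ m = z := by
    intro m hm hm1
    by_contra hcon
    push Not at hcon
    exact hAc m ⟨hm, hcon⟩ hm1
  have hB1 : ∀ m ∈ c2.support, m ∈ c1.support → m ≠ a → m ≠ z → m ∈ intr B := by
    intro m hm hm1 hma hmz
    rcases (hAB.sup m).1 hm with h | h
    · have := hA1 m h hm1
      tauto
    · exact ⟨h, hma, hmz⟩
  have hne : s(x, y) ≠ s(a, z) := by
    intro heq
    have hw : w ∈ intr B := by
      rw [Sym2.eq_iff] at heq
      apply hB1 w hw2 hw1 <;> rintro rfl <;> tauto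
    rw [heq] at he2
    rcases (hAB.edg _).1 he2 with h | h
    · exact path_edge_intr hAB.dj.p1 hvA h
    · exact path_edge_intr hAB.dj.p2 hw h
  have hne' : ¬ ((x = a ∨ x = z) ∧ (y = a ∨ y = z)) := by
    rintro ⟨h, h'⟩
    apply hne
    rw [Sym2.eq_iff]
    grind
  obtain ⟨R, T, hRT, heT⟩ : ∃ R T : G.Walk a z, Arcs c1 R T ∧ s(x, y) ∈ T.edges := by
    obtain ⟨R, T, h⟩ := exists_arcs h1.cyc ha1 hz1 haz
    rcases (h.edg _).1 he1 with h' | h'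
    · exact ⟨T, R, h.symm, h'⟩
    · exact ⟨R, T, h, h'⟩
  obtain ⟨t, htT, ht2⟩ : ∃ t ∈ intr T, t ∈ c2.support := by
    by_cases hx : x = a ∨ x = z
    · refine ⟨y, ⟨T.snd_mem_support_of_mem_edges heT, ?_⟩, hy2⟩
      tauto
    · refine ⟨x, ⟨T.fst_mem_support_of_mem_edges heT, ?_⟩, hx2⟩
      tauto
  have ht1 : t ∈ c1.support := (hRT.sup t).2 (Or.inr htT.1)
  obtain ⟨r, hr⟩ : (intr R).Nonempty := by
    rcases path_intr_or_edge (p := R) haz with h | h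
    · exact h
    · exfalso
      have h4 := h2.ind a ha2 z hz2 (R.adj_of_mem_edges h.1)
      rcases (hAB.edg _).1 h4 with h5 | h5
      · exact path_edge_intr hAB.dj.p1 hvA h5
      · rcases (hAB.edg _).1 he2 with h6 | h6
        · exact hne' ⟨hA1 x (A.fst_mem_support_of_mem_edges h6) hx1,
            hA1 y (A.snd_mem_support_of_mem_edges h6) hy1⟩
        · rw [hAB.dj.p2.eq_adj_toWalk_of_mem_edges h5] at h6
          simp at h6
          apply hne
          rw [Sym2.eq_iff]
          exact h6
  have key : ∀ r ∈ intr R, ∀ t ∈ intr T, ¬ Jn G {v | v ∉ A.support} r t := fun r hr t ht =>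
    no_cross hk h1 hRT haz hAB.dj.p1 ⟨v, hvA⟩ hAc hr ht
  have hAc2 : {v | v ∉ c2.support} ⊆ {v | v ∉ A.support} := fun m hm hm' =>
    hm ((hAB.sup m).2 (Or.inl hm'))
  have htB : t ∈ intr B := hB1 t ht2 ht1 htT.2.1 htT.2.2
  have claim1 : ∀ r ∈ intr R, r ∉ c2.support := by
    intro r hr hr2
    have hrB : r ∈ intr B := hB1 r hr2 ((hRT.sup r).2 (Or.inl hr.1)) hr.2.1 hr.2.2
    refine key r hr t htT ((intr_pc hAB.dj.p2 r hrB t htB).mono ?_)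
    intro m hm hmA
    have := hAB.dj.vd m hmA hm.1
    have := hm.2
    tauto
  have claim2 : ∀ t' ∈ intr T, t' ∈ c2.support := by
    intro t' ht'
    by_contra hcon
    exact key r hr t' ht' ((h2.sep r (claim1 r hr) t' hcon).mono hAc2)
  have hT2 : ∀ m ∈ T.support, m ∈ c2.support := by
    intro m hm
    by_cases hma : m = a
    · rwa [hma]
    by_cases hmz : m = z
    · rwa [hmz]
    exact claim2 m ⟨hm, hma, hmz⟩
  have htR : t ∉ R.support := fun h => hRT.intr_dsj t ⟨h, htT.2⟩ htT
  obtain ⟨p, q, hpq, hp, hq, hr1⟩ := cyc_nbr h1.cyc ht1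
  obtain ⟨p', q', -, -, -, hr2⟩ := cyc_nbr h2.cyc ht2
  have hin : ∀ p, s(t, p) ∈ c1.edges → p = p' ∨ p = q' := by
    intro p hp
    rcases (hRT.edg _).1 hp with h | h
    · exact absurd (R.fst_mem_support_of_mem_edges h) htR
    · exact hr2 p (h2.ind t ht2 p (hT2 p (T.snd_mem_support_of_mem_edges h)) (T.adj_of_mem_edges h))
  have hp' := hin p hp
  have hq' := hin q hq
  obtain ⟨n, htn, hnp, hnq⟩ := h3 t p q
  have hn2 : n ∉ c2.support := by
    intro hn
    have := hr2 n (h2.ind t ht2 n hn htn)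
    grind
  refine key r hr t htT (Jn.symm ?_)
  refine (Jn.adj htn ?_ (hAc2 hn2)).trans ((h2.sep n hn2 r (claim1 r hr)).mono hAc2)
  intro htA
  have := hA1 t htA ht1
  have := htT.2
  tauto

/-- Distinct peripheral cycles through a common edge meet only in its ends. -/
theorem per_two {u1 u2 x y w : V} (hk : ¬ HasMinor G (completeBipartiteGraph (Fin 3) (Fin 3)))
    (h3 : D3 G) {c1 : G.Walk u1 u1} {c2 : G.Walk u2 u2} (h1 : Per c1) (h2 : Per c2)
    (he1 : s(x, y) ∈ c1.edges) (he2 : s(x, y) ∈ c2.edges) (hw1 : w ∈ c1.support)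
    (hw2 : w ∈ c2.support) (hwx : w ≠ x) (hwy : w ≠ y) : ∀ e, e ∈ c1.edges ↔ e ∈ c2.edges :=
  per_sub h1 h2 he2 fun _ hv => per_meet hk h3 h1 h2 he1 he2 hw1 hw2 hwx hwy hv

end PG

open SimpleGraph
namespace PG

variable {V : Type*} {G : SimpleGraph V}

theorem comp_eq {S : Set V} {x y : V} (h : y ∈ Comp G S x) : Comp G S x = Comp G S y := by
  ext z
  exact ⟨fun hz => (Jn.symm h).trans hz, fun hz => Jn.trans h hz⟩

theorem pair_join {S M X Y : Set V} (hS : PC G S) (hX : PC G X) (hXS : X ⊆ S) (hYS : Y ⊆ S)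
    (hM : ∀ v ∈ S, v ∈ X ∨ v ∈ Y ∨ v ∈ M) (hXY : Dsj X Y) (hXn : X.Nonempty) (hYn : Y.Nonempty) :
    ∃ D ⊆ M, PC G (X ∪ D) ∧ Tch G (X ∪ D) Y ∧
      ∀ m ∈ D, D = Comp G M m ∧ Tch G D X ∧ Tch G D Y := by
  obtain ⟨a, ha⟩ := hXn
  obtain ⟨b, hb⟩ := hYn
  obtain ⟨p, hp, q, hq, P, hP, hPS, hPX, hPY⟩ := (hS a (hXS ha) b (hYS hb)).cross ha hb
  have hpq : p ≠ q := by
    rintro rfl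
    exact hXY _ hp hq
  rcases path_intr_or_edge (p := P) hpq with hi | hi
  swap
  · refine ⟨∅, Set.empty_subset _, ?_, ?_, fun m hm => absurd hm (by simp)⟩
    · rwa [Set.union_empty]
    · exact ⟨p, Or.inl hp, q, hq, P.adj_of_mem_edges hi.1⟩
  have hPM : ∀ v ∈ intr P, v ∈ M := by
    intro v hv
    rcases hM v (hPS v hv.1) with h | h | h
    · exact absurd (hPX v hv.1 h) hv.2.1
    · exact absurd (hPY v hv.1 h) hv.2.2
    · exact h
  obtain ⟨m, hm⟩ := hi
  have hPK : intr P ⊆ Comp G M m := fun v hv => (intr_pc hP m hm v hv).mono hPM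
  have tX : Tch G (Comp G M m) X := by
    obtain ⟨x', rfl, b, hb, hxb⟩ := intr_tch_left hP ⟨m, hm⟩
    exact ⟨b, hPK hb, x', hp, hxb.symm⟩
  have tY : Tch G (Comp G M m) Y := by
    obtain ⟨x', rfl, b, hb, hxb⟩ := intr_tch_right hP ⟨m, hm⟩
    exact ⟨b, hPK hb, x', hq, hxb.symm⟩
  refine ⟨Comp G M m, comp_sub, ?_, tY.mono Set.subset_union_right subset_rfl,
    fun m' hm' => ⟨comp_eq hm', tX, tY⟩⟩
  obtain ⟨s, hs, t, ht, hst⟩ := tX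
  exact PC_union hX comp_pc ⟨t, ht, s, hs, Or.inl hst.symm⟩

theorem three_sets {x y : V} (hk : ¬ HasMinor G (completeBipartiteGraph (Fin 3) (Fin 3)))
    (hk5 : ¬ HasMinor G (completeGraph (Fin 5))) (hxy : G.Adj x y) {X Y Z : Set V}
    (hX : PC G X) (hY : PC G Y) (hZ : PC G Z) (dXY : Dsj X Y) (dXZ : Dsj X Z) (dYZ : Dsj Y Z)
    (hx : x ∉ X ∧ x ∉ Y ∧ x ∉ Z) (hy : y ∉ X ∧ y ∉ Y ∧ y ∉ Z)
    (txX : Tch G {x} X) (txY : Tch G {x} Y) (txZ : Tch G {x} Z)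
    (tyX : Tch G {y} X) (tyY : Tch G {y} Y) (tyZ : Tch G {y} Z)
    (cX : PC G {v | v ∉ X ∧ v ≠ x ∧ v ≠ y}) (cY : PC G {v | v ∉ Y ∧ v ≠ x ∧ v ≠ y})
    (cZ : PC G {v | v ∉ Z ∧ v ≠ x ∧ v ≠ y}) : False := by
  have nX : X.Nonempty := by obtain ⟨-, -, b, hb, -⟩ := txX; exact ⟨b, hb⟩
  have nY : Y.Nonempty := by obtain ⟨-, -, b, hb, -⟩ := txY; exact ⟨b, hb⟩
  have nZ : Z.Nonempty := by obtain ⟨-, -, b, hb, -⟩ := txZ; exact ⟨b, hb⟩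
  set M : Set V := {v | v ∉ X ∧ v ∉ Y ∧ v ∉ Z ∧ v ≠ x ∧ v ≠ y} with hM
  have nx : ∀ v ∈ X, v ≠ x ∧ v ≠ y := fun v hv => by
    constructor <;> rintro rfl <;> tauto
  have ny : ∀ v ∈ Y, v ≠ x ∧ v ≠ y := fun v hv => by
    constructor <;> rintro rfl <;> tauto
  have nz : ∀ v ∈ Z, v ≠ x ∧ v ≠ y := fun v hv => by
    constructor <;> rintro rfl <;> tauto
  obtain ⟨D1, hD1, p1, t1, e1⟩ := pair_join (M := M) cZ hX (fun v hv => ⟨dXZ v hv, nx v hv⟩)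
    (fun v hv => ⟨dYZ v hv, ny v hv⟩) (fun v hv => by
      have h1 : v ∉ Z := hv.1
      have h2 := hv.2
      by_cases hvX : v ∈ X
      · exact Or.inl hvX
      by_cases hvY : v ∈ Y
      · exact Or.inr (Or.inl hvY)
      exact Or.inr (Or.inr ⟨hvX, hvY, h1, h2⟩)) dXY nX nY
  obtain ⟨D2, hD2, p2, t2, e2⟩ := pair_join (M := M) cX hY (fun v hv => ⟨dXY.symm v hv, ny v hv⟩)
    (fun v hv => ⟨dXZ.symm v hv, nz v hv⟩) (fun v hv => by
      have h1 : v ∉ X := hv.1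
      have h2 := hv.2
      by_cases hvY : v ∈ Y
      · exact Or.inl hvY
      by_cases hvZ : v ∈ Z
      · exact Or.inr (Or.inl hvZ)
      exact Or.inr (Or.inr ⟨h1, hvY, hvZ, h2⟩)) dYZ nY nZ
  obtain ⟨D3, hD3, p3, t3, e3⟩ := pair_join (M := M) cY hZ (fun v hv => ⟨dYZ.symm v hv, nz v hv⟩)
    (fun v hv => ⟨dXY v hv, nx v hv⟩) (fun v hv => by
      have h1 : v ∉ Y := hv.1
      have h2 := hv.2
      by_cases hvZ : v ∈ Z
      · exact Or.inl hvZ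
      by_cases hvX : v ∈ X
      · exact Or.inr (Or.inl hvX)
      exact Or.inr (Or.inr ⟨hvX, h1, hvZ, h2⟩)) dXZ.symm nZ nX
  have big : ∀ m ∈ M, Tch G (Comp G M m) X → Tch G (Comp G M m) Y → Tch G (Comp G M m) Z →
      False := by
    intro m hm h1 h2 h3
    apply hk
    have hs : Comp G M m ⊆ M := comp_sub
    exact k33_three (a := x) (z := y) hxy.ne comp_pc hX hY hZ dXY dXZ dYZ
      (fun v hv => (hs hv).1) (fun v hv => (hs hv).2.1) (fun v hv => (hs hv).2.2.1)
      ⟨fun h => (hs h).2.2.2.1 rfl, hx⟩ ⟨fun h => (hs h).2.2.2.2 rfl, hy⟩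
      txX txY txZ tyX tyY tyZ h1 h2 h3
  have d12 : Dsj D1 D2 := by
    intro m h1 h2
    obtain ⟨q1, q2, q3⟩ := e1 m h1
    obtain ⟨r1, r2, r3⟩ := e2 m h2
    rw [q1] at q2 q3
    rw [r1] at r2 r3
    exact big m (hD1 h1) q2 q3 r3
  have d13 : Dsj D1 D3 := by
    intro m h1 h2
    obtain ⟨q1, q2, q3⟩ := e1 m h1
    obtain ⟨r1, r2, r3⟩ := e3 m h2
    rw [q1] at q2 q3
    rw [r1] at r2 r3
    exact big m (hD1 h1) q2 q3 r2
  have d23 : Dsj D2 D3 := by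
    intro m h1 h2
    obtain ⟨q1, q2, q3⟩ := e2 m h1
    obtain ⟨r1, r2, r3⟩ := e3 m h2
    rw [q1] at q2 q3
    rw [r1] at r2 r3
    exact big m (hD2 h1) r3 q2 q3
  have hxM : x ∉ M := fun h => h.2.2.2.1 rfl
  have hyM : y ∉ M := fun h => h.2.2.2.2 rfl
  apply hk5
  refine k5_three (X := X ∪ D1) (Y := Y ∪ D2) (Z := Z ∪ D3) hxy p1 p2 p3 ?_ ?_ ?_ ?_ ?_
    (txX.mono subset_rfl Set.subset_union_left) (txY.mono subset_rfl Set.subset_union_left)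
    (txZ.mono subset_rfl Set.subset_union_left) (tyX.mono subset_rfl Set.subset_union_left)
    (tyY.mono subset_rfl Set.subset_union_left) (tyZ.mono subset_rfl Set.subset_union_left)
    (t1.mono subset_rfl Set.subset_union_left) (t3.mono subset_rfl Set.subset_union_left).symm
    (t2.mono subset_rfl Set.subset_union_left)
  · rintro v (h | h) (h' | h')
    · exact dXY v h h'
    · exact (hD2 h').1 h
    · exact (hD1 h).2.1 h'
    · exact d12 v h h'
  · rintro v (h | h) (h' | h')
    · exact dXZ v h h'
    · exact (hD3 h').1 h
    · exact (hD1 h).2.2.1 h'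
    · exact d13 v h h'
  · rintro v (h | h) (h' | h')
    · exact dYZ v h h'
    · exact (hD3 h').2.1 h
    · exact (hD2 h).2.2.1 h'
    · exact d23 v h h'
  · refine ⟨?_, ?_, ?_⟩ <;> rintro (h | h)
    · exact hx.1 h
    · exact hxM (hD1 h)
    · exact hx.2.1 h
    · exact hxM (hD2 h)
    · exact hx.2.2 h
    · exact hxM (hD3 h)
  · refine ⟨?_, ?_, ?_⟩ <;> rintro (h | h)
    · exact hy.1 h
    · exact hyM (hD1 h)
    · exact hy.2.1 h
    · exact hyM (hD2 h)
    · exact hy.2.2 h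
    · exact hyM (hD3 h)

theorem per_arc {u x y : V} {c : G.Walk u u} (h : Per c) (he : s(x, y) ∈ c.edges) :
    ∃ X : Set V, PC G X ∧ x ∉ X ∧ y ∉ X ∧ Tch G {x} X ∧ Tch G {y} X ∧
      PC G {v | v ∉ X ∧ v ≠ x ∧ v ≠ y} ∧ ∀ v ∈ X, v ∈ c.support := by
  have hxy := (c.adj_of_mem_edges he).ne
  obtain ⟨p, q, hpq, heq⟩ : ∃ p q : G.Walk x y, Arcs c p q ∧ s(x, y) ∈ q.edges := by
    obtain ⟨R, T, h⟩ := exists_arcs h.cyc (c.fst_mem_support_of_mem_edges he)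
      (c.snd_mem_support_of_mem_edges he) hxy
    rcases (h.edg _).1 he with h' | h'
    · exact ⟨T, R, h.symm, h'⟩
    · exact ⟨R, T, h, h'⟩
  have hi : (intr p).Nonempty := by
    rcases path_intr_or_edge (p := p) hxy with h' | h'
    · exact h'
    · exact absurd heq (hpq.dj.ed _ h'.1)
  refine ⟨intr p, intr_pc hpq.dj.p1, fun h => h.2.1 rfl, fun h => h.2.2 rfl,
    intr_tch_left hpq.dj.p1 hi, intr_tch_right hpq.dj.p1 hi, ?_,
    fun v hv => (hpq.sup v).2 (Or.inl hv.1)⟩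
  have : {v | v ∉ intr p ∧ v ≠ x ∧ v ≠ y} = {v | v ∉ c.support} := by
    ext v
    have hq : v ∈ q.support ↔ v = x ∨ v = y := by
      rw [hpq.dj.p2.eq_adj_toWalk_of_mem_edges heq]
      simp
    have hc := hpq.sup v
    rw [hq] at hc
    constructor
    · rintro ⟨h1, h2, h3⟩ h4
      rcases hc.1 h4 with h5 | h5
      · exact h1 ⟨h5, h2, h3⟩
      · tauto
    · intro h1
      have h1 : v ∉ c.support := h1
      rw [hc] at h1
      exact ⟨fun h2 => h1 (Or.inl h2.1), fun h => h1 (Or.inr (Or.inl h)),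
        fun h => h1 (Or.inr (Or.inr h))⟩
  rw [this]
  exact h.sep

theorem per_three {u1 u2 u3 x y : V}
    (hk : ¬ HasMinor G (completeBipartiteGraph (Fin 3) (Fin 3)))
    (hk5 : ¬ HasMinor G (completeGraph (Fin 5))) (h3 : D3 G)
    {c1 : G.Walk u1 u1} {c2 : G.Walk u2 u2} {c3 : G.Walk u3 u3} (h1 : Per c1) (h2 : Per c2)
    (h4 : Per c3) (he1 : s(x, y) ∈ c1.edges) (he2 : s(x, y) ∈ c2.edges) (he3 : s(x, y) ∈ c3.edges)
    (n12 : ¬ ∀ e, e ∈ c1.edges ↔ e ∈ c2.edges) (n13 : ¬ ∀ e, e ∈ c1.edges ↔ e ∈ c3.edges)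
    (n23 : ¬ ∀ e, e ∈ c2.edges ↔ e ∈ c3.edges) : False := by
  obtain ⟨X, a1, a2, a3, a4, a5, a6, a7⟩ := per_arc h1 he1
  obtain ⟨Y, b1, b2, b3, b4, b5, b6, b7⟩ := per_arc h2 he2
  obtain ⟨Z, d1, d2, d3, d4, d5, d6, d7⟩ := per_arc h4 he3
  refine three_sets hk hk5 (c1.adj_of_mem_edges he1) a1 b1 d1 ?_ ?_ ?_ ⟨a2, b2, d2⟩ ⟨a3, b3, d3⟩
    a4 b4 d4 a5 b5 d5 a6 b6 d6
  · intro v hv hv'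
    refine n12 (per_two hk h3 h1 h2 he1 he2 (a7 v hv) (b7 v hv') ?_ ?_) <;> rintro rfl
    · exact a2 hv
    · exact a3 hv
  · intro v hv hv'
    refine n13 (per_two hk h3 h1 h4 he1 he3 (a7 v hv) (d7 v hv') ?_ ?_) <;> rintro rfl
    · exact a2 hv
    · exact a3 hv
  · intro v hv hv'
    refine n23 (per_two hk h3 h2 h4 he2 he3 (b7 v hv) (d7 v hv') ?_ ?_) <;> rintro rfl
    · exact b2 hv
    · exact b3 hv

end PG

open SimpleGraph
namespace PG

variable {V : Type*} {G : SimpleGraph V}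

section
open Classical

/-- The edge sets of peripheral cycles. -/
noncomputable def Fam [Fintype V] (G : SimpleGraph V) : Finset (Finset (Sym2 V)) :=
  Finset.univ.filter fun F => ∃ (u : V) (c : G.Walk u u), Per c ∧ F = c.edges.toFinset

theorem mem_Fam [Fintype V] {F : Finset (Sym2 V)} :
    F ∈ Fam G ↔ ∃ (u : V) (c : G.Walk u u), Per c ∧ F = c.edges.toFinset := by
  simp [Fam]

theorem vec_cycle {u : V} {c : G.Walk u u} (hc : c.IsCycle) (e : Sym2 V) :
    vec c e = if e ∈ c.edges then 1 else 0 := by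
  unfold vec
  split_ifs with h
  · rw [List.count_eq_one_of_mem hc.edges_nodup h]
    simp
  · rw [List.count_eq_zero_of_not_mem h]
    simp

theorem finrank_PS [Fintype V] : Module.finrank (ZMod 2) (PS G) ≤ (Fam G).card := by
  have : PS G = Submodule.span (ZMod 2) (((Fam G).image
      (fun F : Finset (Sym2 V) => fun e => if e ∈ F then (1 : ZMod 2) else 0) :
        Finset (Sym2 V → ZMod 2)) : Set (Sym2 V → ZMod 2)) := by
    unfold PS
    congr 1
    ext f
    simp only [Finset.coe_image, Set.mem_image, Finset.mem_coe, mem_Fam, Set.mem_ofPred_eq]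
    constructor
    · rintro ⟨u, c, hc, rfl⟩
      refine ⟨_, ⟨u, c, hc, rfl⟩, ?_⟩
      funext e
      rw [vec_cycle hc.cyc]
      simp
    · rintro ⟨F, ⟨u, c, hc, rfl⟩, rfl⟩
      refine ⟨u, c, hc, ?_⟩
      funext e
      rw [vec_cycle hc.cyc]
      simp
  rw [this]
  exact (finrank_span_finset_le_card _).trans Finset.card_image_le

theorem euler_ge [Fintype V] (h3 : C3 G) (hc : G.Connected) :
    G.edgeFinset.card + 1 ≤ (Fam G).card + Fintype.card V := by
  obtain ⟨T, hTG, hT⟩ := hc.exists_isTree_le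
  have hTc := hT.card_edgeFinset
  have hsub : T.edgeFinset ⊆ G.edgeFinset := by
    rw [edgeFinset_subset_edgeFinset]
    exact hTG
  set NT := G.edgeFinset \ T.edgeFinset with hNT
  have hcard : NT.card = G.edgeFinset.card - T.edgeFinset.card := Finset.card_sdiff_of_subset hsub
  let π : (Sym2 V → ZMod 2) →ₗ[ZMod 2] (NT → ZMod 2) := LinearMap.funLeft _ _ Subtype.val
  have hmap : (PS G).map π = ⊤ := by
    rw [eq_top_iff, ← (Pi.basisFun (ZMod 2) NT).span_eq, Submodule.span_le]
    rintro _ ⟨⟨e, he⟩, rfl⟩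
    have he' := he
    rw [hNT, Finset.mem_sdiff, mem_edgeFinset, mem_edgeFinset] at he'
    induction e with
    | _ a b =>
      obtain ⟨heG, heT⟩ := he'
      have hab : G.Adj a b := heG
      obtain ⟨p0⟩ := hT.1.preconnected b a
      let p := p0.bypass
      have hp : p.IsPath := p0.bypass_isPath
      have hpe : ∀ e ∈ (p.mapLe hTG).edges, e ∈ T.edgeSet := by
        intro e he
        rw [Walk.edges_mapLe_eq_edges] at he
        exact p.edges_subset_edgeSet he
      have hcyc : (Walk.cons hab (p.mapLe hTG)).IsCycle := by
        rw [Walk.cons_isCycle_iff]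
        exact ⟨(Walk.isPath_mapLe hTG).2 hp, fun h => heT (hpe _ h)⟩
      refine ⟨_, tutte h3 hcyc, ?_⟩
      funext ⟨e', he'⟩
      have he'' := he'
      rw [hNT, Finset.mem_sdiff, mem_edgeFinset, mem_edgeFinset] at he''
      have : e' ∈ (Walk.cons hab (p.mapLe hTG)).edges ↔ e' = s(a, b) := by
        rw [Walk.edges_cons, List.mem_cons]
        exact ⟨fun h => h.resolve_right fun h => he''.2 (hpe _ h), Or.inl⟩
      change vec _ e' = _
      rw [vec_cycle hcyc]
      simp only [this, Pi.basisFun_apply, Pi.single_apply, Subtype.mk.injEq]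
  have h1 : Module.finrank (ZMod 2) ((PS G).map π) = NT.card := by
    rw [hmap, finrank_top, Module.finrank_fintype_fun_eq_card, Fintype.card_coe]
  have h2 := Submodule.finrank_map_le π (PS G)
  have h4 := finrank_PS (G := G)
  omega

theorem fam_sub [Fintype V] {F : Finset (Sym2 V)} (hF : F ∈ Fam G) : F ⊆ G.edgeFinset := by
  obtain ⟨u, c, hc, rfl⟩ := mem_Fam.1 hF
  intro e he
  rw [List.mem_toFinset] at he
  rw [mem_edgeFinset]
  exact c.edges_subset_edgeSet he

theorem fam_card [Fintype V] {F : Finset (Sym2 V)} (hF : F ∈ Fam G) : 3 ≤ F.card := by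
  obtain ⟨u, c, hc, rfl⟩ := mem_Fam.1 hF
  rw [List.toFinset_card_of_nodup hc.cyc.edges_nodup, Walk.length_edges]
  exact hc.cyc.three_le_length

theorem fam_two [Fintype V] (hk : ¬ HasMinor G (completeBipartiteGraph (Fin 3) (Fin 3)))
    (hk5 : ¬ HasMinor G (completeGraph (Fin 5))) (h3 : D3 G) (e : Sym2 V) :
    ((Fam G).filter (e ∈ ·)).card ≤ 2 := by
  by_contra hcon
  push Not at hcon
  obtain ⟨F1, F2, F3, h1, h2, h4, n12, n13, n23⟩ := Finset.two_lt_card_iff.1 hcon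
  rw [Finset.mem_filter] at h1 h2 h4
  obtain ⟨u1, c1, p1, rfl⟩ := mem_Fam.1 h1.1
  obtain ⟨u2, c2, p2, rfl⟩ := mem_Fam.1 h2.1
  obtain ⟨u3, c3, p3, rfl⟩ := mem_Fam.1 h4.1
  have e1 := List.mem_toFinset.1 h1.2
  have e2 := List.mem_toFinset.1 h2.2
  have e3 := List.mem_toFinset.1 h4.2
  induction e with
  | _ x y =>
    refine per_three hk hk5 h3 p1 p2 p3 e1 e2 e3 (fun h => n12 ?_) (fun h => n13 ?_)
      (fun h => n23 ?_) <;> ext e <;> simp [h e]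

theorem fam_tri [Fintype V] {F : Finset (Sym2 V)} (hF : F ∈ Fam G) (h3 : F.card = 3) {a b : V}
    (hab : s(a, b) ∈ F) : ∃ d, F = {s(a, b), s(a, d), s(b, d)} ∧ G.Adj a b ∧ G.Adj a d ∧
      G.Adj b d := by
  obtain ⟨u, c, hc, rfl⟩ := mem_Fam.1 hF
  have hab' := List.mem_toFinset.1 hab
  have other : ∀ a b, s(a, b) ∈ c.edges → ∃ d, d ≠ b ∧ s(a, d) ∈ c.edges := by
    intro a b hab
    obtain ⟨p, q, hpq, hp, hq, -⟩ := cyc_nbr hc.cyc (c.fst_mem_support_of_mem_edges hab)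
    by_cases h : p = b
    · exact ⟨q, fun h' => hpq (h.trans h'.symm), hq⟩
    · exact ⟨p, h, hp⟩
  obtain ⟨d, hdb, had⟩ := other a b hab'
  obtain ⟨d', hda, hbd⟩ := other b a (by rwa [Sym2.eq_swap])
  have aab := c.adj_of_mem_edges hab'
  have aad := c.adj_of_mem_edges had
  have abd := c.adj_of_mem_edges hbd
  have hFeq : ({s(a, b), s(a, d), s(b, d')} : Finset (Sym2 V)) = c.edges.toFinset := by
    apply Finset.eq_of_subset_of_card_le
    · intro e he
      simp only [Finset.mem_insert, Finset.mem_singleton] at he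
      rw [List.mem_toFinset]
      rcases he with rfl | rfl | rfl <;> assumption
    · rw [h3]
      have n1 := aab.ne
      have n2 := aad.ne
      have n3 := abd.ne
      rw [Finset.card_eq_three.2 ⟨s(a, b), s(a, d), s(b, d'), ?_, ?_, ?_, rfl⟩]
      all_goals
        rw [Ne, Sym2.eq_iff]
        grind
  have hdd : d' = d := by
    obtain ⟨m, hma, hdm⟩ := other d a (by rwa [Sym2.eq_swap])
    have : s(d, m) ∈ c.edges.toFinset := List.mem_toFinset.2 hdm
    rw [← hFeq] at this
    simp only [Finset.mem_insert, Finset.mem_singleton, Sym2.eq_iff] at this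
    have n1 := aab.ne
    have n2 := aad.ne
    grind
  subst hdd
  exact ⟨d', hFeq.symm, aab, aad, abd⟩

theorem exists_ne3 [Fintype V] (hV : 4 ≤ Fintype.card V) (a b d : V) :
    ∃ y, y ≠ a ∧ y ≠ b ∧ y ≠ d := by
  by_contra hcon
  push Not at hcon
  have : (Finset.univ : Finset V) ⊆ {a, b, d} := by
    intro y _
    simp only [Finset.mem_insert, Finset.mem_singleton]
    have := hcon y
    tauto
  have h1 := Finset.card_le_card this
  have h2 := Finset.card_le_three (a := a) (b := b) (c := d)
  rw [Finset.card_univ] at h1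
  omega

theorem D3_of_C3 [Fintype V] (hV : 4 ≤ Fintype.card V) (h3 : C3 G) : D3 G := by
  intro v p q
  have key : ∀ p : V, ∃ p', p' ≠ v ∧ (p = v ∨ p = p') := by
    intro p
    by_cases h : p = v
    · obtain ⟨y, hy, -⟩ := exists_ne3 hV v v v
      exact ⟨y, hy, Or.inl h⟩
    · exact ⟨p, h, Or.inr rfl⟩
  obtain ⟨p', hp, hp'⟩ := key p
  obtain ⟨q', hq, hq'⟩ := key q
  obtain ⟨y, hyv, hyp, hyq⟩ := exists_ne3 hV v p' q'
  obtain ⟨a, rfl, b, hb, hab, -, hbs⟩ :=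
    (h3 p' q' v y hp.symm hq.symm hyp hyq).exit (D := {v}) rfl hyv
  have hb' : b ≠ a := hb
  refine ⟨b, hab, ?_, ?_⟩
  · rcases hp' with rfl | rfl
    · exact hb'
    · exact hbs.1
  · rcases hq' with rfl | rfl
    · exact hb'
    · exact hbs.2

theorem conn_of_C3 [Fintype V] (hV : 4 ≤ Fintype.card V) (h3 : C3 G) : G.Connected := by
  have : Nonempty V := Fintype.card_pos_iff.1 (by omega)
  refine ⟨fun x y => ?_⟩
  obtain ⟨s, hsx, hsy, -⟩ := exists_ne3 hV x y y
  obtain ⟨p, -⟩ := h3 s s x y hsx.symm hsx.symm hsy.symm hsy.symm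
  exact ⟨p⟩

/-- The counting theorem. -/
theorem count [Fintype V] (hk : ¬ HasMinor G (completeBipartiteGraph (Fin 3) (Fin 3)))
    (hk5 : ¬ HasMinor G (completeGraph (Fin 5))) (h3 : C3 G) (hV : 9 ≤ Fintype.card V) (u v : V)
    (hdeg : ∀ w, w ≠ u → w ≠ v → 5 ≤ (G.neighborSet w).ncard)
    (hK : ∀ a b d d' : V, d ≠ d' → G.Adj a b → G.Adj a d → G.Adj b d → G.Adj a d' → G.Adj b d' →
      s(u, v) ∉ [s(a, b), s(a, d), s(b, d), s(a, d'), s(b, d')] → False) : False := by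
  have hD := D3_of_C3 (by omega) h3
  have hconn := conn_of_C3 (by omega) h3
  have hE := euler_ge h3 hconn
  have h2 := fam_two hk hk5 hD
  set E := G.edgeFinset.card with hEdef
  set e0 := s(u, v) with he0
  -- double counting
  have hsum : ∑ F ∈ Fam G, F.card ≤ E * 2 := by
    have := Finset.sum_card_inter_le (s := G.edgeFinset) (B := Fam G) (n := 2) (fun e _ => h2 e)
    refine le_trans (Finset.sum_le_sum fun F hF => ?_) this
    rw [Finset.inter_eq_right.2 (fam_sub hF)]
  set Tr := (Fam G).filter (fun F => F.card = 3 ∧ e0 ∉ F) with hTr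
  have htri : ((Fam G).filter (fun F => F.card = 3)).card ≤ Tr.card + 2 := by
    refine le_trans (Finset.card_le_card (t := Tr ∪ (Fam G).filter (e0 ∈ ·)) ?_)
      ((Finset.card_union_le _ _).trans (Nat.add_le_add_left (h2 e0) _))
    intro F hF
    simp only [hTr, Finset.mem_union, Finset.mem_filter] at hF ⊢
    tauto
  have hlow : 4 * (Fam G).card ≤ ∑ F ∈ Fam G, F.card +
      ((Fam G).filter (fun F => F.card = 3)).card := by
    rw [Finset.card_filter, ← Finset.sum_add_distrib, mul_comm, ← smul_eq_mul]
    apply Finset.card_nsmul_le_sum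
    intro F hF
    have := fam_card hF
    split_ifs <;> omega
  have hdis : 3 * Tr.card ≤ E := by
    have hpd : ∀ F ∈ Tr, ∀ F' ∈ Tr, F ≠ F' → Disjoint F F' := by
      intro F hF F' hF' hne
      rw [hTr, Finset.mem_filter] at hF hF'
      rw [Finset.disjoint_left]
      intro e he he'
      induction e with
      | _ a b =>
        obtain ⟨d, hFd, hab, had, hbd⟩ := fam_tri hF.1 hF.2.1 he
        obtain ⟨d', hFd', -, had', hbd'⟩ := fam_tri hF'.1 hF'.2.1 he'
        refine hK a b d d' ?_ hab had hbd had' hbd' ?_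
        · rintro rfl
          exact hne (hFd.trans hFd'.symm)
        · have n1 := hF.2.2
          have n2 := hF'.2.2
          rw [hFd] at n1
          rw [hFd'] at n2
          simp only [Finset.mem_insert, Finset.mem_singleton] at n1 n2
          simp only [List.mem_cons, List.not_mem_nil]
          tauto
    have hb : (Tr.biUnion id).card = ∑ F ∈ Tr, F.card := Finset.card_biUnion hpd
    have hb2 : ∑ F ∈ Tr, F.card = Tr.card * 3 := by
      apply Finset.sum_const_nat
      intro F hF
      exact (Finset.mem_filter.1 hF).2.1
    have hb3 : (Tr.biUnion id).card ≤ E := by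
      apply Finset.card_le_card
      intro e he
      obtain ⟨F, hF, he⟩ := Finset.mem_biUnion.1 he
      exact fam_sub (Finset.mem_filter.1 hF).1 he
    omega
  have hdeg' : ∑ w : V, G.degree w = 2 * E := G.sum_degrees_eq_twice_card_edges
  have hd3 : ∀ w, 3 ≤ G.degree w := by
    intro w
    obtain ⟨n1, a1, -, -⟩ := hD w w w
    obtain ⟨n2, a2, b2, -⟩ := hD w n1 n1
    obtain ⟨n3, a3, b3, c3⟩ := hD w n1 n2
    rw [← G.card_neighborFinset_eq_degree, ← Finset.card_eq_three.2
      ⟨n1, n2, n3, b2.symm, b3.symm, c3.symm, rfl⟩]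
    apply Finset.card_le_card
    intro m hm
    simp only [Finset.mem_insert, Finset.mem_singleton] at hm
    rw [mem_neighborFinset]
    rcases hm with rfl | rfl | rfl <;> assumption
  have hd5 : ∀ w, 5 ≤ G.degree w + (if w = u then 2 else 0) + (if w = v then 2 else 0) := by
    intro w
    by_cases h1 : w = u
    · have := hd3 w
      rw [if_pos h1]
      omega
    by_cases h2 : w = v
    · have := hd3 w
      rw [if_pos h2]
      omega
    have := hdeg w h1 h2
    rw [Set.ncard_eq_toFinset_card', ← neighborFinset_def, card_neighborFinset_eq_degree] at this
    omega
  have hlast : 5 * Fintype.card V ≤ 2 * E + 2 + 2 := by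
    have := Finset.card_nsmul_le_sum (Finset.univ : Finset V) _ 5 (fun w _ => hd5 w)
    rw [Finset.sum_add_distrib, Finset.sum_add_distrib, hdeg'] at this
    simp only [Finset.sum_ite_eq', Finset.mem_univ, if_true, Finset.card_univ, smul_eq_mul] at this
    omega
  omega

end
end PG

open SimpleGraph
namespace PG

variable {V : Type*} {G : SimpleGraph V}

/-- Connectivity after deleting one vertex. -/
def C2 (G : SimpleGraph V) : Prop := ∀ s x y : V, x ≠ s → y ≠ s → Jn G {v | v ≠ s} x y

theorem C2_of (h : IsKConnected 2 G) : C2 G := by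
  intro s x y hx hy
  have h1 := h.2 {s} (Set.finite_singleton s) (by simp)
  exact (PC_iff.1 h1.preconnected) x hx y hy

/-- A fragment: a set separated from the rest by two vertices. -/
structure Frag (G : SimpleGraph V) (A : Set V) (s t : V) : Prop where
  ne : A.Nonempty
  cl : ∀ a ∈ A, ∀ b, G.Adj a b → b ∈ A ∨ b = s ∨ b = t
  sA : s ∉ A
  tA : t ∉ A
  out : ∃ o, o ∉ A ∧ o ≠ s ∧ o ≠ t

theorem Frag.symm {A : Set V} {s t : V} (h : Frag G A s t) : Frag G A t s := by
  obtain ⟨h1, h2, h3, h4, o, h5, h6, h7⟩ := h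
  exact ⟨h1, fun a ha b hb => (h2 a ha b hb).imp_right Or.symm, h4, h3, o, h5, h7, h6⟩

theorem Frag.tch {A : Set V} {s t : V} (h2 : C2 G) (h : Frag G A s t) : Tch G A {s} := by
  obtain ⟨a, ha⟩ := h.ne
  obtain ⟨o, ho, hos, hot⟩ := h.out
  have hat : a ≠ t := by rintro rfl; exact h.tA ha
  obtain ⟨p, hp, b, hb, hpb, -, hbt⟩ := (h2 t a o hat hot).exit ha ho
  rcases h.cl p hp b hpb with h' | h' | h'
  · exact absurd h' hb
  · exact ⟨p, hp, b, h', hpb⟩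
  · exact absurd h' hbt

theorem Frag.st {A : Set V} {s t : V} (h2 : C2 G) (h : Frag G A s t) : s ≠ t := by
  rintro rfl
  obtain ⟨a, ha⟩ := h.ne
  obtain ⟨o, ho, hos, hot⟩ := h.out
  have hat : a ≠ s := by rintro rfl; exact h.tA ha
  obtain ⟨p, hp, b, hb, hpb, -, hbt⟩ := (h2 s a o hat hot).exit ha ho
  rcases h.cl p hp b hpb with h' | h' | h'
  · exact hb h'
  · exact hbt h'
  · exact hbt h'

theorem Frag.side {A : Set V} {s t : V} (h2 : C2 G) (h : Frag G A s t) :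
    ∃ D : Set V, PC G D ∧ Dsj D A ∧ s ∉ D ∧ t ∉ D ∧ Tch G D {s} ∧ Tch G D {t} := by
  obtain ⟨a, ha⟩ := h.ne
  obtain ⟨o, ho, hos, hot⟩ := h.out
  set M : Set V := {w | w ∉ A ∧ w ≠ s ∧ w ≠ t} with hM
  have hoD : o ∈ Comp G M o := comp_self ⟨ho, hos, hot⟩
  have hDM : ∀ w ∈ Comp G M o, w ∈ M := fun w hw => comp_sub hw
  have haD : a ∉ Comp G M o := fun h' => (hDM _ h').1 ha
  have hnA : ∀ p ∈ Comp G M o, ∀ b, G.Adj p b → b ∉ A := by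
    intro p hp b hpb hbA
    have := h.cl b hbA p hpb.symm
    have := hDM p hp
    obtain ⟨q1, q2, q3⟩ := this
    tauto
  refine ⟨Comp G M o, comp_pc, fun w hw => (hDM w hw).1, fun h => (hDM _ h).2.1 rfl,
    fun h => (hDM _ h).2.2 rfl, ?_, ?_⟩
  · have hat : a ≠ t := by rintro rfl; exact h.tA ha
    obtain ⟨p, hp, b, hb, hpb, -, hbt⟩ := (h2 t o a hot hat).exit hoD haD
    refine ⟨p, hp, b, ?_, hpb⟩
    by_contra hbs
    exact hb (comp_closed hp hpb ⟨hnA p hp b hpb, hbs, hbt⟩)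
  · have hat : a ≠ s := by rintro rfl; exact h.sA ha
    obtain ⟨p, hp, b, hb, hpb, -, hbt⟩ := (h2 s o a hos hat).exit hoD haD
    refine ⟨p, hp, b, ?_, hpb⟩
    by_contra hbs
    exact hb (comp_closed hp hpb ⟨hnA p hp b hpb, hbt, hbs⟩)

theorem frag_of_not_C3 (h : ¬ C3 G) : ∃ A s t, Frag G A s t := by
  unfold C3 at h
  push Not at h
  obtain ⟨s, t, x, y, hxs, hxt, hys, hyt, hj⟩ := h
  refine ⟨Comp G {v | v ≠ s ∧ v ≠ t} x, s, t, ⟨x, comp_self ⟨hxs, hxt⟩⟩, ?_,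
    fun h => (comp_sub h).1 rfl, fun h => (comp_sub h).2 rfl, y, hj, hys, hyt⟩
  intro a ha b hab
  by_contra hcon
  push Not at hcon
  exact hcon.1 (comp_closed ha hab hcon.2)

/-- The graph on `B` obtained from `G` by adding the edge `uv`. -/
def Hg (G : SimpleGraph V) (B : Set V) (u v : V) : SimpleGraph B where
  Adj x y := x ≠ y ∧ (G.Adj x y ∨ ((x.1 = u ∨ x.1 = v) ∧ (y.1 = u ∨ y.1 = v)))
  symm := ⟨fun x y h => ⟨h.1.symm, h.2.imp (fun h => h.symm) And.symm⟩⟩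
  loopless := ⟨fun x h => h.1 rfl⟩

theorem Hg_cases {B : Set V} {u v : V} {x y : B} (h : (Hg G B u v).Adj x y) :
    G.Adj x y ∨ (x.1 = u ∧ y.1 = v) ∨ (x.1 = v ∧ y.1 = u) := by
  obtain ⟨h1, h2⟩ := h
  have : x.1 ≠ y.1 := fun h => h1 (Subtype.ext h)
  rcases h2 with h2 | ⟨h2, h3⟩
  · exact Or.inl h2
  · grind

/-- Lifted branch sets. -/
def lft {B : Set V} (D : Set V) (u : V) (S : Set B) : Set V :=
  {w | (∃ x ∈ S, x.1 = w) ∨ (w ∈ D ∧ ∃ x ∈ S, x.1 = u)}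

theorem lft_pc {B D : Set V} {u v : V} (hD : PC G D) (hu : Tch G D {u}) (hv : Tch G D {v})
    {S : Set B} (hS : PC (Hg G B u v) S) : PC G (lft D u S) := by
  obtain ⟨d1, hd1, u', rfl, ha1⟩ := hu
  obtain ⟨d2, hd2, v', rfl, ha2⟩ := hv
  have hmem : ∀ x ∈ S, x.1 ∈ lft D u' S := fun x hx => Or.inl ⟨x, hx, rfl⟩
  have huD : (∃ x ∈ S, x.1 = u') → ∀ d ∈ D, Jn G (lft D u' S) u' d := by
    rintro hx d hd
    have hsub : D ⊆ lft D u' S := fun w hw => Or.inr ⟨hw, hx⟩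
    exact (Jn.adj ha1.symm (Or.inl hx) (hsub hd1)).trans ((hD d1 hd1 d hd).mono hsub)
  have huv : (∃ x ∈ S, x.1 = u') → (∃ x ∈ S, x.1 = v') → Jn G (lft D u' S) u' v' := by
    intro hx hy
    have hsub : D ⊆ lft D u' S := fun w hw => Or.inr ⟨hw, hx⟩
    exact (huD hx d2 hd2).trans (Jn.adj ha2 (hsub hd2) (Or.inl hy))
  have hstep : ∀ x ∈ S, ∀ y ∈ S, (Hg G B u' v').Adj x y → Jn G (lft D u' S) x.1 y.1 := by
    intro x hx y hy hxy
    rcases Hg_cases hxy with h | ⟨h1, h2⟩ | ⟨h1, h2⟩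
    · exact Jn.adj h (hmem x hx) (hmem y hy)
    · rw [h1, h2]
      exact huv ⟨x, hx, h1⟩ ⟨y, hy, h2⟩
    · rw [h1, h2]
      exact (huv ⟨y, hy, h2⟩ ⟨x, hx, h1⟩).symm
  have hwalk : ∀ x y : B, ∀ p : (Hg G B u' v').Walk x y, (∀ z ∈ p.support, z ∈ S) →
      Jn G (lft D u' S) x.1 y.1 := by
    intro x y p
    induction p with
    | nil =>
      intro h
      exact Jn.refl (hmem _ (h _ (by simp)))
    | @cons a b c hab p ih =>
      intro h
      have h' : ∀ z ∈ p.support, z ∈ S := fun z hz => h z (by simp [hz])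
      exact (hstep a (h a (by simp)) b (h' b p.start_mem_support) hab).trans (ih h')
  have hall : ∀ w ∈ lft D u' S, ∃ x ∈ S, Jn G (lft D u' S) w x.1 := by
    rintro w (⟨x, hx, rfl⟩ | ⟨hw, hx⟩)
    · exact ⟨x, hx, Jn.refl (hmem x hx)⟩
    · obtain ⟨x, hxS, hxu⟩ := id hx
      refine ⟨x, hxS, ?_⟩
      rw [hxu]
      exact (huD hx w hw).symm
  intro p hp q hq
  obtain ⟨x, hx, hpx⟩ := hall p hp
  obtain ⟨y, hy, hqy⟩ := hall q hq
  obtain ⟨r, hr⟩ := hS x hx y hy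
  exact (hpx.trans (hwalk x y r hr)).trans hqy.symm

theorem minor_lift {W : Type*} {M : SimpleGraph W} {B D : Set V} {u v : V} (hD : PC G D)
    (hu : Tch G D {u}) (hv : Tch G D {v}) (hDB : Dsj D B) (h : HasMinor (Hg G B u v) M) :
    HasMinor G M := by
  obtain ⟨f, h1, h2, h3⟩ := h
  refine ⟨fun w => lft D u (f w), ?_, ?_, ?_⟩
  · intro w
    apply conn_of_PC (lft_pc hD hu hv (PC_iff.1 (h1 w).preconnected))
    obtain ⟨⟨x, hx⟩⟩ := (h1 w).nonempty
    exact ⟨x.1, Or.inl ⟨x, hx, rfl⟩⟩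
  · intro w1 w2 hne
    have hdj := Set.disjoint_left.1 (h2 w1 w2 hne)
    rw [Set.disjoint_left]
    rintro w (⟨x, hx, rfl⟩ | ⟨hw, x, hx, hxu⟩) (⟨y, hy, hxy⟩ | ⟨hw', y, hy, hyu⟩)
    · rw [Subtype.ext hxy] at hy
      exact hdj hx hy
    · exact hDB _ hw' x.2
    · rw [← hxy] at hw
      exact hDB _ hw y.2
    · rw [Subtype.ext (hyu.trans hxu.symm)] at hy
      exact hdj hx hy
  · intro w1 w2 hadj
    obtain ⟨x, hx, y, hy, hxy⟩ := h3 w1 w2 hadj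
    obtain ⟨d2, hd2, v', rfl, ha2⟩ := hv
    rcases Hg_cases hxy with h | ⟨h1, h2⟩ | ⟨h1, h2⟩
    · exact ⟨x.1, Or.inl ⟨x, hx, rfl⟩, y.1, Or.inl ⟨y, hy, rfl⟩, h⟩
    · exact ⟨d2, Or.inr ⟨hd2, x, hx, h1⟩, v', Or.inl ⟨y, hy, h2⟩, ha2⟩
    · exact ⟨v', Or.inl ⟨x, hx, h1⟩, d2, Or.inr ⟨hd2, y, hy, h2⟩, ha2.symm⟩

/-- A minimal fragment gives a 3-connected graph. -/
theorem Hg_C3 [Finite V] {A : Set V} {u v : V} (h2 : C2 G) (h : Frag G A u v)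
    (hmin : ∀ A' s t, Frag G A' s t → A.ncard ≤ A'.ncard) :
    C3 (Hg G (A ∪ {u, v}) u v) := by
  set B : Set V := A ∪ {u, v} with hB
  set H := Hg G B u v with hH
  have uB : u ∈ B := Or.inr (Or.inl rfl)
  have vB : v ∈ B := Or.inr (Or.inr rfl)
  have huv := h.st h2
  have main : ∀ (Z : Set B) (x s t y : B), x ∈ Z → s ∉ Z → t ∉ Z → y ∉ Z → y ≠ s → y ≠ t →
      (⟨u, uB⟩ : B) ∉ Z → (⟨v, vB⟩ : B) ∉ Z →
      (∀ a ∈ Z, ∀ b, H.Adj a b → b ∈ Z ∨ b = s ∨ b = t) → False := by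
    intro Z x s t y hx hs ht hy hys hyt hu hv hcl
    have hZA : Set.image Subtype.val Z ⊆ A := by
      rintro _ ⟨⟨z, hz⟩, hzZ, rfl⟩
      rcases id hz with hz' | rfl | rfl
      · exact hz'
      · exact absurd hzZ hu
      · exact absurd hzZ hv
    have hn : ∀ b : B, b ∉ Z → b.1 ∉ Set.image Subtype.val Z := by
      rintro b hb ⟨b', hb', heq⟩
      rw [Subtype.ext heq] at hb'
      exact hb hb'
    have hF : Frag G (Set.image Subtype.val Z) s.1 t.1 := by
      refine ⟨⟨x.1, x, hx, rfl⟩, ?_, hn s hs, hn t ht, y.1, hn y hy, fun h => hys (Subtype.ext h),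
        fun h => hyt (Subtype.ext h)⟩
      rintro _ ⟨a, ha, rfl⟩ b hab
      have hbB : b ∈ B := by
        rcases h.cl a.1 (hZA ⟨a, ha, rfl⟩) b hab with h' | rfl | rfl
        · exact Or.inl h'
        · exact uB
        · exact vB
      have hadj : H.Adj a ⟨b, hbB⟩ := ⟨fun h => hab.ne (congrArg Subtype.val h), Or.inl hab⟩
      rcases hcl a ha _ hadj with h' | h' | h'
      · exact Or.inl ⟨_, h', rfl⟩
      · exact Or.inr (Or.inl (congrArg Subtype.val h'))
      · exact Or.inr (Or.inr (congrArg Subtype.val h'))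
    have heq : Set.image Subtype.val Z = A := Set.eq_of_subset_of_ncard_le hZA (hmin _ _ _ hF)
      (Set.toFinite _)
    have hout : ∀ b : B, b ∉ Z → b.1 = u ∨ b.1 = v := by
      intro b hb
      have := hn b hb
      rw [heq] at this
      rcases b.2 with h' | h' | h'
      · exact absurd h' this
      · exact Or.inl h'
      · exact Or.inr h'
    have hst := hF.st h2
    have h1 := hout s hs
    have h3 := hout t ht
    have h4 := hout y hy
    have h5 : y.1 ≠ s.1 := fun h => hys (Subtype.ext h)
    have h6 : y.1 ≠ t.1 := fun h => hyt (Subtype.ext h)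
    grind
  intro s t x y hxs hxt hys hyt
  by_contra hj
  set M : Set B := {v | v ≠ s ∧ v ≠ t} with hM
  have hcl : ∀ x : B, ∀ a ∈ Comp H M x, ∀ b, H.Adj a b → b ∈ Comp H M x ∨ b = s ∨ b = t := by
    intro x a ha b hab
    by_contra hcon
    push Not at hcon
    exact hcon.1 (comp_closed ha hab hcon.2)
  have hs : ∀ x : B, s ∉ Comp H M x := fun x h => (comp_sub h).1 rfl
  have ht : ∀ x : B, t ∉ Comp H M x := fun x h => (comp_sub h).2 rfl
  have hXY : ∀ z, z ∈ Comp H M x → z ∈ Comp H M y → False := fun z h1 h2 =>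
    hj (Jn.trans h1 (Jn.symm h2))
  have hx : x ∈ Comp H M x := comp_self ⟨hxs, hxt⟩
  have hy : y ∈ Comp H M y := comp_self ⟨hys, hyt⟩
  have hadj : H.Adj ⟨u, uB⟩ ⟨v, vB⟩ :=
    ⟨fun h => huv (congrArg Subtype.val h), Or.inr ⟨Or.inl rfl, Or.inr rfl⟩⟩
  by_cases hu : (⟨u, uB⟩ : B) ∈ Comp H M x ∨ (⟨v, vB⟩ : B) ∈ Comp H M x
  · refine main (Comp H M y) y s t x hy (hs y) (ht y) (fun h => hXY _ hx h) hxs hxt ?_ ?_ (hcl y)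
    · intro hu'
      rcases hu with hu | hu
      · exact hXY _ hu hu'
      · exact hXY _ hu (comp_closed hu' hadj (comp_sub hu))
    · intro hu'
      rcases hu with hu | hu
      · exact hXY _ hu (comp_closed hu' hadj.symm (comp_sub hu))
      · exact hXY _ hu hu'
  · push Not at hu
    exact main (Comp H M x) x s t y hx (hs x) (ht x) (fun h => hXY _ h hy) hys hyt hu.1 hu.2 (hcl x)

theorem nine [Finite V] (hK : ¬ containsK4minus G) (hdeg : ∀ v : V, 5 ≤ (G.neighborSet v).ncard)
    {p q : V} (hpq : G.Adj p q) : 9 ≤ (G.neighborSet p ∪ G.neighborSet q).ncard := by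
  have h1 := Set.ncard_union_add_ncard_inter (G.neighborSet p) (G.neighborSet q)
  have h2 : (G.neighborSet p ∩ G.neighborSet q).ncard ≤ 1 := by
    rw [Set.ncard_le_one]
    rintro a ⟨ha1, ha2⟩ b ⟨hb1, hb2⟩
    by_contra hab
    rw [mem_neighborSet] at ha1 ha2 hb1 hb2
    exact hK ⟨p, q, a, b, hpq.ne, ha1.ne, hb1.ne, ha2.ne, hb2.ne, hab, hpq, ha1, hb1, ha2, hb2⟩
  have h3 := hdeg p
  have h4 := hdeg q
  omega

theorem main [Fintype V] (h2 : IsKConnected 2 G) (hpl : IsPlanar G)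
    (hdeg : ∀ v : V, 5 ≤ (G.neighborSet v).ncard) : containsK4minus G := by
  classical
  by_contra hK
  have hC2 := C2_of h2
  have hKK : ∀ a b d d' : V, d ≠ d' → G.Adj a b → G.Adj a d → G.Adj b d → G.Adj a d' →
      G.Adj b d' → False := fun a b d d' hne h1 h2 h3 h4 h5 =>
    hK ⟨a, b, d, d', h1.ne, h2.ne, h4.ne, h3.ne, h5.ne, hne, h1, h2, h4, h3, h5⟩
  by_cases h3 : C3 G
  · obtain ⟨p⟩ : Nonempty V := by
      by_contra hcon
      rw [not_nonempty_iff] at hcon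
      have := h2.1
      simp [Set.eq_empty_of_isEmpty] at this
    have hp := hdeg p
    obtain ⟨q, hq⟩ : (G.neighborSet p).Nonempty := by
      apply Set.nonempty_of_ncard_ne_zero
      omega
    have h9 := nine hK hdeg hq
    have h9' := Set.ncard_le_card (G.neighborSet p ∪ G.neighborSet q)
    rw [Nat.card_eq_fintype_card] at h9'
    exact count hpl.2 hpl.1 h3 (by omega) p p (fun w _ _ => hdeg w)
      fun a b d d' hne a1 a2 a3 a4 a5 _ => hKK a b d d' hne a1 a2 a3 a4 a5
  · have hex : ∃ n, ∃ A s t, Frag G A s t ∧ A.ncard = n := by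
      obtain ⟨A, s, t, h⟩ := frag_of_not_C3 h3
      exact ⟨_, A, s, t, h, rfl⟩
    obtain ⟨A, u, v, hF, hcard⟩ := Nat.find_spec hex
    have hmin : ∀ A' s t, Frag G A' s t → A.ncard ≤ A'.ncard := by
      intro A' s t h'
      rw [hcard]
      exact Nat.find_min' hex ⟨A', s, t, h', rfl⟩
    obtain ⟨D, hD, hDA, huD, hvD, tu, tv⟩ := hF.side hC2
    have hDB : Dsj D (A ∪ {u, v}) := by
      rintro d hd (h | rfl | rfl)
      · exact hDA d hd h
      · exact huD hd
      · exact hvD hd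
    have hN : ∀ p ∈ A, G.neighborSet p ⊆ A ∪ {u, v} := by
      intro p hp b hb
      rcases hF.cl p hp b hb with h | rfl | rfl
      · exact Or.inl h
      · exact Or.inr (Or.inl rfl)
      · exact Or.inr (Or.inr rfl)
    have hcardB : 9 ≤ (A ∪ {u, v} : Set V).ncard := by
      obtain ⟨p, hp⟩ := hF.ne
      have hq : ∃ q ∈ A, G.Adj p q := by
        by_contra hcon
        push Not at hcon
        have hs : G.neighborSet p ⊆ {u, v} := by
          intro b hb
          rcases hN p hp hb with h | h
          · exact absurd hb (hcon b h)
          · exact h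
        have h1 := Set.ncard_le_ncard hs
        have h2 := Set.ncard_insert_le u {v}
        rw [Set.ncard_singleton] at h2
        have h3 := hdeg p
        omega
      obtain ⟨q, hq, hpq⟩ := hq
      exact (nine hK hdeg hpq).trans (Set.ncard_le_ncard (Set.union_subset (hN p hp) (hN q hq)))
    have huB : u ∈ A ∪ {u, v} := Or.inr (Or.inl rfl)
    have hvB : v ∈ A ∪ {u, v} := Or.inr (Or.inr rfl)
    refine count (G := Hg G (A ∪ {u, v}) u v) (fun h => hpl.2 (minor_lift hD tu tv hDB h))
      (fun h => hpl.1 (minor_lift hD tu tv hDB h)) (Hg_C3 hC2 hF hmin) ?_ ⟨u, huB⟩ ⟨v, hvB⟩ ?_ ?_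
    · rwa [← Nat.card_eq_fintype_card, Nat.card_coe_set_eq]
    · rintro ⟨w, hw⟩ hwu hwv
      have hwA : w ∈ A := by
        rcases id hw with h | rfl | rfl
        · exact h
        · exact absurd rfl hwu
        · exact absurd rfl hwv
      refine (hdeg w).trans ?_
      rw [← Set.ncard_image_of_injective _ Subtype.val_injective]
      refine Set.ncard_le_ncard ?_ (Set.toFinite _)
      intro b hb
      refine ⟨⟨b, hN w hwA hb⟩, ⟨fun h => ?_, Or.inl hb⟩, rfl⟩
      exact (G.ne_of_adj hb) (congrArg Subtype.val h)
    · intro a b d d' hne a1 a2 a3 a4 a5 hnot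
      simp only [List.mem_cons, List.not_mem_nil, or_false, not_or] at hnot
      have key : ∀ x y : (A ∪ {u, v} : Set V), (Hg G (A ∪ {u, v}) u v).Adj x y →
          s((⟨u, huB⟩ : (A ∪ {u, v} : Set V)), ⟨v, hvB⟩) ≠ s(x, y) → G.Adj x.1 y.1 := by
        intro x y hxy hn
        rcases Hg_cases hxy with h | ⟨h1, h2⟩ | ⟨h1, h2⟩
        · exact h
        · exact absurd (Sym2.eq_iff.2 (Or.inl ⟨Subtype.ext h1.symm, Subtype.ext h2.symm⟩)) hn
        · exact absurd (Sym2.eq_iff.2 (Or.inr ⟨Subtype.ext h2.symm, Subtype.ext h1.symm⟩)) hn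
      obtain ⟨n1, n2, n3, n4, n5⟩ := hnot
      exact hKK a.1 b.1 d.1 d'.1 (fun h => hne (Subtype.ext h)) (key _ _ a1 n1) (key _ _ a2 n2)
        (key _ _ a3 n3) (key _ _ a4 n4) (key _ _ a5 n5)

end PG


/-- Every 2-connected planar graph with minimum degree at least 5
contains `K₄⁻` as a subgraph. -/
theorem stmt1 {V : Type*} [Fintype V] (G : SimpleGraph V)
    (h2 : IsKConnected 2 G) (hpl : IsPlanar G)
    (hdeg : ∀ v : V, 5 ≤ (G.neighborSet v).ncard) :
    containsK4minus G := by exact PG.main h2 hpl hdeg
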